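/- Let ρ^{ABCD} be a state of a quadripartite quantum system on finite-dimensional Hilbert spaces satisfying S(C|A) + S(C|BD) = 0, I(A;C|BD) = 0 and S(A|D) + S(A|BC) = 0. Then S(C|D) + S(C|BD) ≤ 0. -/

import Mathlib

/-!
Purify `ρ` by a system `E`. Entropies of complementary subsystems of a pure state agree, so the
hypotheses say that `C - A - E`, `C - E - A` and `A - D - E` are quantum Markov chains (equality in
strong subadditivity), and the claim becomes `S(C|D) ≤ S(C|AE)`.

Equality in strong subadditivity is exploited through exact recovery identities. The difference of
relative entropies is written by means of the function `T ↦ -Tr ρ log(L_ρ + T R_σ) 1` (`interp`),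
with `L`, `R` left and right multiplication. Its derivative involves `⟨ρ, (L_ρ + T R_σ)⁻¹ ρ⟩`, and
completing the square (`square_identity`) shows that the derivative of the difference between the
full and the reduced function is nonnegative. When the limits at `0` and `∞` agree the derivative
vanishes, hence so do the squares, and letting `T → ∞` and `T → 0` gives the identities of
`recovery` and, for states saturating strong subadditivity, `markov`.

The two chains `C - A - E` and `C - E - A` together give `ρ_{AEC} = a ρ_{AE}` (`double_markov`) with
`a` positive on `AC`, commuting with `ρ_{AE}`, whose blocks with respect to a basis of `C` commute
with each other and act on `ρ_{AE}` like operators on `E`. Hence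
`S(C|AE) = -Tr ρ_{AC} log a`. The chain `A - D - E` moves those blocks to `D` (`transfer_markov`,
`transfer`): there is a Hermitian `t` on `DC`, commuting with `ρ_D`, whose blocks act on `ρ_{AD}`
like those of `a`. Since the blocks of `a` commute, the same holds for all polynomials in `a` and `t`
(`moments`), so `Tr ρ_{AC} f(a) = Tr ρ_{DC} f(t)` for every function `f`. Klein's inequality for
`ρ_{DC}` against the state `t ρ_D` then yields
`S(C|D) ≤ -Tr ρ_{DC} log t = -Tr ρ_{AC} log a = S(C|AE)` (`core`).
-/

open scoped BigOperators ComplexOrder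

/-- Von Neumann entropy (base 2) of a matrix: for a Hermitian matrix, the Shannon
entropy of its eigenvalues; junk value `0` for non-Hermitian matrices. -/
noncomputable def vNEntropy {n : Type*} [Fintype n] [DecidableEq n] (M : Matrix n n ℂ) : ℝ :=
  if h : M.IsHermitian then -∑ i, (h.eigenvalues i) * Real.logb 2 (h.eigenvalues i) else 0

/-- A density matrix: positive semidefinite with trace one. -/
def IsState {n : Type*} [Fintype n] [DecidableEq n] (M : Matrix n n ℂ) : Prop :=
  M.PosSemidef ∧ M.trace = 1

section Quad

variable {A B C D : Type*} [Fintype A] [DecidableEq A] [Fintype B] [DecidableEq B]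
  [Fintype C] [DecidableEq C] [Fintype D] [DecidableEq D]
  (ρ : Matrix (A × B × C × D) (A × B × C × D) ℂ)

/-- Entropies of the 15 marginals of a quadripartite state. -/
noncomputable def SA : ℝ :=
  vNEntropy (Matrix.of fun a a' : A => ∑ b, ∑ c, ∑ d, ρ (a, b, c, d) (a', b, c, d))
noncomputable def SB : ℝ :=
  vNEntropy (Matrix.of fun b b' : B => ∑ a, ∑ c, ∑ d, ρ (a, b, c, d) (a, b', c, d))
noncomputable def SC : ℝ :=
  vNEntropy (Matrix.of fun c c' : C => ∑ a, ∑ b, ∑ d, ρ (a, b, c, d) (a, b, c', d))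
noncomputable def SD : ℝ :=
  vNEntropy (Matrix.of fun d d' : D => ∑ a, ∑ b, ∑ c, ρ (a, b, c, d) (a, b, c, d'))
noncomputable def SAB : ℝ :=
  vNEntropy (Matrix.of fun p q : A × B => ∑ c, ∑ d, ρ (p.1, p.2, c, d) (q.1, q.2, c, d))
noncomputable def SAC : ℝ :=
  vNEntropy (Matrix.of fun p q : A × C => ∑ b, ∑ d, ρ (p.1, b, p.2, d) (q.1, b, q.2, d))
noncomputable def SAD : ℝ :=
  vNEntropy (Matrix.of fun p q : A × D => ∑ b, ∑ c, ρ (p.1, b, c, p.2) (q.1, b, c, q.2))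
noncomputable def SBC : ℝ :=
  vNEntropy (Matrix.of fun p q : B × C => ∑ a, ∑ d, ρ (a, p.1, p.2, d) (a, q.1, q.2, d))
noncomputable def SBD : ℝ :=
  vNEntropy (Matrix.of fun p q : B × D => ∑ a, ∑ c, ρ (a, p.1, c, p.2) (a, q.1, c, q.2))
noncomputable def SCD : ℝ :=
  vNEntropy (Matrix.of fun p q : C × D => ∑ a, ∑ b, ρ (a, b, p.1, p.2) (a, b, q.1, q.2))
noncomputable def SABC : ℝ :=
  vNEntropy (Matrix.of fun p q : A × B × C =>
    ∑ d, ρ (p.1, p.2.1, p.2.2, d) (q.1, q.2.1, q.2.2, d))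
noncomputable def SABD : ℝ :=
  vNEntropy (Matrix.of fun p q : A × B × D =>
    ∑ c, ρ (p.1, p.2.1, c, p.2.2) (q.1, q.2.1, c, q.2.2))
noncomputable def SACD : ℝ :=
  vNEntropy (Matrix.of fun p q : A × C × D =>
    ∑ b, ρ (p.1, b, p.2.1, p.2.2) (q.1, b, q.2.1, q.2.2))
noncomputable def SBCD : ℝ :=
  vNEntropy (Matrix.of fun p q : B × C × D =>
    ∑ a, ρ (a, p.1, p.2.1, p.2.2) (a, q.1, q.2.1, q.2.2))
noncomputable def SABCD : ℝ := vNEntropy ρ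

end Quad

namespace QInfo

open Matrix Polynomial
open scoped Kronecker

set_option linter.unusedSimpArgs false
set_option linter.unusedSectionVars false

/-! ### Functional calculus and entropy -/

section Spectral

variable {n : Type*} [Fintype n] [DecidableEq n]

/-- `U` is a unitary matrix diagonalizing `M`, with real eigenvalues `p`. -/
structure IsDiag (M U : Matrix n n ℂ) (p : n → ℝ) : Prop where
  left : Uᴴ * U = 1
  eq : M = U * diagonal (fun i => (p i : ℂ)) * Uᴴ

theorem IsDiag.right {M U : Matrix n n ℂ} {p : n → ℝ} (h : IsDiag M U p) : U * Uᴴ = 1 :=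
  mul_eq_one_comm.mp h.left

theorem exists_isDiag {M : Matrix n n ℂ} (hM : M.IsHermitian) :
    IsDiag M (hM.eigenvectorUnitary : Matrix n n ℂ) hM.eigenvalues where
  left := by
    rw [← star_eq_conjTranspose]; exact Unitary.coe_star_mul_self _
  eq := by
    conv_lhs => rw [hM.spectral_theorem, Unitary.conjStarAlgAut_apply]
    rfl

theorem IsDiag.isHermitian {M U : Matrix n n ℂ} {p : n → ℝ} (h : IsDiag M U p) :
    M.IsHermitian := by
  rw [h.eq]
  apply isHermitian_mul_mul_conjTranspose
  rw [IsHermitian, diagonal_conjTranspose]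
  congr 1; ext i; simp

/-- A complex polynomial with prescribed values on a finite set of real nodes. -/
theorem exists_poly (s : Finset ℝ) (f : ℝ → ℝ) :
    ∃ F : ℂ[X], ∀ x ∈ s, F.eval (x : ℂ) = (f x : ℂ) := by
  refine ⟨Lagrange.interpolate s (fun x : ℝ => (x : ℂ)) (fun x => (f x : ℂ)), fun x hx => ?_⟩
  exact Lagrange.eval_interpolate_at_node (fun x => (f x : ℂ))
    (Complex.ofReal_injective.injOn) hx

theorem IsDiag.aeval {M U : Matrix n n ℂ} {p : n → ℝ} (h : IsDiag M U p) (F : ℂ[X]) :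
    aeval M F = U * diagonal (fun i => F.eval (p i : ℂ)) * Uᴴ := by
  induction F using Polynomial.induction_on' with
  | add F G hF hG =>
    rw [map_add, hF, hG, ← add_mul, ← mul_add, diagonal_add]
    simp
  | monomial k c =>
    have hk : M ^ k = U * diagonal (fun i => (p i : ℂ) ^ k) * Uᴴ := by
      induction k with
      | zero => simp [h.right]
      | succ k ih =>
        rw [pow_succ, ih]
        conv_lhs => rw [h.eq]
        calc _ = U * diagonal (fun i => (p i : ℂ) ^ k) * (Uᴴ * U) *
              diagonal (fun i => (p i : ℂ)) * Uᴴ := by simp only [mul_assoc]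
          _ = _ := by
            rw [h.left, mul_one, mul_assoc U, diagonal_mul_diagonal]
            simp [pow_succ]
    rw [aeval_monomial, hk, Matrix.algebraMap_eq_diagonal]
    simp only [eval_monomial]
    have : diagonal (fun i => c * (p i : ℂ) ^ k) = c • diagonal (fun i => (p i : ℂ) ^ k) := by
      ext i j; by_cases hij : i = j <;> simp [hij]
    rw [this]
    have h2 : (diagonal ((algebraMap ℂ (n → ℂ)) c) : Matrix n n ℂ) = c • 1 := by
      ext i j; by_cases hij : i = j <;> simp [hij]
    rw [h2]; simp

/-- The real function `f` applied to a Hermitian matrix through its spectral decomposition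
(junk value `0` for other matrices). -/
noncomputable def fn (f : ℝ → ℝ) (M : Matrix n n ℂ) : Matrix n n ℂ :=
  open Classical in
  if h : M.IsHermitian then
    (h.eigenvectorUnitary : Matrix n n ℂ) * diagonal (fun i => (f (h.eigenvalues i) : ℂ)) *
      (h.eigenvectorUnitary : Matrix n n ℂ)ᴴ
  else 0

theorem fn_eq_aeval {M : Matrix n n ℂ} (hM : M.IsHermitian) (f : ℝ → ℝ) {F : ℂ[X]}
    (hF : ∀ i, F.eval (hM.eigenvalues i : ℂ) = (f (hM.eigenvalues i) : ℂ)) :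
    fn f M = aeval M F := by
  rw [(exists_isDiag hM).aeval F, fn, dif_pos hM]
  simp only [hF]

theorem IsDiag.fn_eq {M U : Matrix n n ℂ} {p : n → ℝ} (h : IsDiag M U p) (f : ℝ → ℝ) :
    fn f M = U * diagonal (fun i => (f (p i) : ℂ)) * Uᴴ := by
  obtain ⟨F, hF⟩ := exists_poly
    (Finset.univ.image h.isHermitian.eigenvalues ∪ Finset.univ.image p) f
  rw [fn_eq_aeval h.isHermitian f (F := F), h.aeval]
  · congr 3; ext i; rw [hF]; simp
  · intro i; apply hF; simp

theorem IsDiag.fn_diag {M U : Matrix n n ℂ} {p : n → ℝ} (h : IsDiag M U p) (f : ℝ → ℝ) :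
    IsDiag (fn f M) U (fun i => f (p i)) := ⟨h.left, h.fn_eq f⟩

theorem fn_isHermitian {M : Matrix n n ℂ} (hM : M.IsHermitian) (f : ℝ → ℝ) :
    (fn f M).IsHermitian := ((exists_isDiag hM).fn_diag f).isHermitian

theorem fn_mul {M : Matrix n n ℂ} (hM : M.IsHermitian) (f g : ℝ → ℝ) :
    fn f M * fn g M = fn (fun x => f x * g x) M := by
  have h := exists_isDiag hM
  rw [h.fn_eq, h.fn_eq, h.fn_eq]
  set U := (hM.eigenvectorUnitary : Matrix n n ℂ)
  calc _ = U * diagonal (fun i => (f (hM.eigenvalues i) : ℂ)) * (Uᴴ * U) *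
              diagonal (fun i => (g (hM.eigenvalues i) : ℂ)) * Uᴴ := by simp only [mul_assoc]
    _ = _ := by
      rw [h.left, mul_one, mul_assoc U, diagonal_mul_diagonal]
      simp

theorem fn_id {M : Matrix n n ℂ} (hM : M.IsHermitian) : fn (fun x => x) M = M := by
  have h := exists_isDiag hM
  rw [h.fn_eq]; exact h.eq.symm

theorem fn_congr {M : Matrix n n ℂ} (hM : M.IsHermitian) {f g : ℝ → ℝ}
    (hfg : ∀ i, f (hM.eigenvalues i) = g (hM.eigenvalues i)) : fn f M = fn g M := by
  simp [fn, hM, hfg]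

theorem fn_one {M : Matrix n n ℂ} (hM : M.IsHermitian) : fn (fun _ => 1) M = 1 := by
  have h := exists_isDiag hM
  rw [h.fn_eq]; simp [h.right]

/-- A single polynomial realizes `fn f` on two given Hermitian matrices. -/
theorem exists_poly_fn₂ {m : Type*} [Fintype m] [DecidableEq m] {M : Matrix n n ℂ}
    {N : Matrix m m ℂ} (hM : M.IsHermitian) (hN : N.IsHermitian) (f : ℝ → ℝ) :
    ∃ F : ℂ[X], fn f M = aeval M F ∧ fn f N = aeval N F := by
  obtain ⟨F, hF⟩ := exists_poly
    (Finset.univ.image hM.eigenvalues ∪ Finset.univ.image hN.eigenvalues) f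
  exact ⟨F, fn_eq_aeval hM f fun i => hF _ (by simp), fn_eq_aeval hN f fun i => hF _ (by simp)⟩

theorem map_isHermitian {m : Type*} [Fintype m] [DecidableEq m]
    (ι : Matrix m m ℂ →⋆ₐ[ℂ] Matrix n n ℂ) {M : Matrix m m ℂ} (hM : M.IsHermitian) :
    (ι M).IsHermitian := by
  have := map_star ι M
  rw [star_eq_conjTranspose, star_eq_conjTranspose, hM.eq] at this
  exact this.symm

theorem map_fn {m : Type*} [Fintype m] [DecidableEq m]
    (ι : Matrix m m ℂ →⋆ₐ[ℂ] Matrix n n ℂ) {M : Matrix m m ℂ} (hM : M.IsHermitian) (f : ℝ → ℝ) :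
    ι (fn f M) = fn f (ι M) := by
  obtain ⟨F, h1, h2⟩ := exists_poly_fn₂ hM (map_isHermitian ι hM) f
  rw [h1, h2, aeval_algHom_apply]

theorem commute_aeval {M N : Matrix n n ℂ} (h : Commute M N) (F : ℂ[X]) :
    Commute (aeval M F) N := by
  induction F using Polynomial.induction_on' with
  | add F G hF hG => rw [map_add]; exact hF.add_left hG
  | monomial k c =>
    rw [aeval_monomial]
    exact Commute.mul_left (Algebra.commutes c N) (h.pow_left k)

theorem commute_fn {M N : Matrix n n ℂ} (hM : M.IsHermitian) (h : Commute M N) (f : ℝ → ℝ) :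
    Commute (fn f M) N := by
  obtain ⟨F, h1, -⟩ := exists_poly_fn₂ hM hM f
  rw [h1]; exact commute_aeval h F

end Spectral

section Entropy

variable {n : Type*} [Fintype n] [DecidableEq n]

/-- Von Neumann entropy in natural units: `-Tr M log M`. -/
noncomputable def ent (M : Matrix n n ℂ) : ℝ := -(trace (M * fn Real.log M)).re

theorem IsDiag.trace_eq {M U : Matrix n n ℂ} {p : n → ℝ} (h : IsDiag M U p) :
    trace M = ∑ i, (p i : ℂ) := by
  rw [h.eq, trace_mul_cycle, h.left, one_mul, trace_diagonal]

theorem IsDiag.ent_eq {M U : Matrix n n ℂ} {p : n → ℝ} (h : IsDiag M U p) :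
    ent M = -∑ i, p i * Real.log (p i) := by
  have h1 : M * fn Real.log M = fn (fun x => x * Real.log x) M := by
    rw [← fn_mul h.isHermitian, fn_id h.isHermitian]
  rw [ent, h1, (h.fn_diag _).trace_eq, ← Complex.ofReal_sum, Complex.ofReal_re]

theorem vNEntropy_eq {M : Matrix n n ℂ} (hM : M.IsHermitian) :
    vNEntropy M = ent M / Real.log 2 := by
  rw [vNEntropy, dif_pos hM, (exists_isDiag hM).ent_eq, neg_div, Finset.sum_div]
  simp [Real.logb, mul_div_assoc]

theorem vNEntropy_eq_roots {M : Matrix n n ℂ} (hM : M.IsHermitian) :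
    vNEntropy M = (M.charpoly.roots.map (fun z : ℂ => -(z.re * Real.logb 2 z.re))).sum := by
  rw [vNEntropy, dif_pos hM, hM.roots_charpoly_eq_eigenvalues, Multiset.map_map]
  simp

/-- The two reductions of a pure state have the same entropy. -/
theorem vNEntropy_mul_comm {m : Type*} [Fintype m] [DecidableEq m] (K : Matrix m n ℂ) :
    vNEntropy (K * Kᴴ) = vNEntropy ((Kᴴ * K)ᵀ) := by
  rw [vNEntropy_eq_roots (isHermitian_mul_conjTranspose_self K),
    vNEntropy_eq_roots (isHermitian_conjTranspose_mul_self K).transpose, charpoly_transpose]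
  rcases le_total (Fintype.card n) (Fintype.card m) with h | h
  · rw [charpoly_mul_comm_of_le K Kᴴ h, Polynomial.roots_mul, Polynomial.roots_X_pow]
    · simp [Multiset.map_nsmul, Multiset.sum_nsmul]
    · exact mul_ne_zero (pow_ne_zero _ X_ne_zero) (charpoly_monic _).ne_zero
  · rw [charpoly_mul_comm_of_le Kᴴ K h, Polynomial.roots_mul, Polynomial.roots_X_pow]
    · simp [Multiset.map_nsmul, Multiset.sum_nsmul]
    · exact mul_ne_zero (pow_ne_zero _ X_ne_zero) (charpoly_monic _).ne_zero

theorem vNEntropy_submatrix {m : Type*} [Fintype m] [DecidableEq m] (e : m ≃ n)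
    {M : Matrix n n ℂ} (hM : M.IsHermitian) : vNEntropy (M.submatrix e e) = vNEntropy M := by
  rw [vNEntropy_eq_roots hM, vNEntropy_eq_roots (hM.submatrix e), ← charpoly_reindex e.symm M]
  rfl

end Entropy

/-! ### Two-variable functional calculus -/

section Sol

variable {n : Type*} [Fintype n] [DecidableEq n]

/-- The two-variable functional calculus `f(L_ρ, R_σ)` applied to the identity, where `L_ρ` is left
multiplication by `ρ = U p Uᴴ` and `R_σ` right multiplication by `σ = V q Vᴴ`. -/
noncomputable def sol (U V : Matrix n n ℂ) (p q : n → ℝ) (f : ℝ → ℝ → ℝ) : Matrix n n ℂ :=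
  U * (of fun i j => (f (p i) (q j) : ℂ) * (Uᴴ * V) i j) * Vᴴ

variable {ρ σ U V : Matrix n n ℂ} {p q : n → ℝ}

theorem sol_congr {f g : ℝ → ℝ → ℝ}
    (h : ∀ i j, (Uᴴ * V) i j ≠ 0 → f (p i) (q j) = g (p i) (q j)) :
    sol U V p q f = sol U V p q g := by
  unfold sol
  congr 2
  ext i j
  by_cases hij : (Uᴴ * V) i j = 0
  · simp [hij]
  · simp [h i j hij]

theorem sol_add (f g : ℝ → ℝ → ℝ) :
    sol U V p q (fun x y => f x y + g x y) = sol U V p q f + sol U V p q g := by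
  unfold sol
  rw [← add_mul, ← mul_add]
  congr 2
  ext i j
  simp [add_mul]

theorem sol_smul (c : ℝ) (f : ℝ → ℝ → ℝ) :
    sol U V p q (fun x y => c * f x y) = (c : ℂ) • sol U V p q f := by
  unfold sol
  rw [← smul_mul_assoc, ← mul_smul_comm]
  congr 2
  ext i j
  simp [mul_assoc]

theorem fn_mul_fn_eq_sol (hρ : IsDiag ρ U p) (hσ : IsDiag σ V q) (f g : ℝ → ℝ) :
    fn f ρ * fn g σ = sol U V p q (fun x y => f x * g y) := by
  rw [hρ.fn_eq, hσ.fn_eq, sol]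
  calc _ = U * (diagonal (fun i => (f (p i) : ℂ)) * (Uᴴ * V) *
              diagonal (fun i => (g (q i) : ℂ))) * Vᴴ := by simp only [mul_assoc]
    _ = _ := by
      congr 2
      ext i j
      simp [mul_diagonal, diagonal_mul]; ring

theorem fn_mul_sol (hρ : IsDiag ρ U p) (g : ℝ → ℝ) (f : ℝ → ℝ → ℝ) :
    fn g ρ * sol U V p q f = sol U V p q (fun x y => g x * f x y) := by
  rw [hρ.fn_eq, sol, sol]
  calc _ = U * (diagonal (fun i => (g (p i) : ℂ)) * ((Uᴴ * U) *
        (of fun i j => (f (p i) (q j) : ℂ) * (Uᴴ * V) i j))) * Vᴴ := by simp only [mul_assoc]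
    _ = _ := by
      rw [hρ.left, one_mul]
      congr 2
      ext i j
      simp [diagonal_mul]; ring

theorem sol_mul_fn (hσ : IsDiag σ V q) (g : ℝ → ℝ) (f : ℝ → ℝ → ℝ) :
    sol U V p q f * fn g σ = sol U V p q (fun x y => f x y * g y) := by
  rw [hσ.fn_eq, sol, sol]
  calc _ = U * ((of fun i j => (f (p i) (q j) : ℂ) * (Uᴴ * V) i j) * (Vᴴ * V) *
        diagonal (fun i => (g (q i) : ℂ))) * Vᴴ := by simp only [mul_assoc]
    _ = _ := by
      rw [hσ.left, mul_one]
      congr 2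
      ext i j
      simp [mul_diagonal]; ring

theorem mul_sol (hρ : IsDiag ρ U p) (f : ℝ → ℝ → ℝ) :
    ρ * sol U V p q f = sol U V p q (fun x y => x * f x y) := by
  conv_lhs => rw [← fn_id hρ.isHermitian]
  exact fn_mul_sol hρ _ _

theorem sol_mul (hσ : IsDiag σ V q) (f : ℝ → ℝ → ℝ) :
    sol U V p q f * σ = sol U V p q (fun x y => f x y * y) := by
  conv_lhs => rw [← fn_id hσ.isHermitian]
  exact sol_mul_fn hσ _ _

theorem sol_fst (hρ : IsDiag ρ U p) (hσ : IsDiag σ V q) (f : ℝ → ℝ) :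
    sol U V p q (fun x _ => f x) = fn f ρ := by
  rw [← mul_one (fn f ρ), ← fn_one hσ.isHermitian, fn_mul_fn_eq_sol hρ hσ]; simp

theorem sol_snd (hρ : IsDiag ρ U p) (hσ : IsDiag σ V q) (f : ℝ → ℝ) :
    sol U V p q (fun _ y => f y) = fn f σ := by
  rw [← one_mul (fn f σ), ← fn_one hρ.isHermitian, fn_mul_fn_eq_sol hρ hσ]; simp

/-- The doubly stochastic overlap weights `|⟨u_i, v_j⟩|²`. -/
noncomputable def wt (U V : Matrix n n ℂ) (i j : n) : ℝ := Complex.normSq ((Uᴴ * V) i j)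

theorem wt_nonneg (i j : n) : 0 ≤ wt U V i j := Complex.normSq_nonneg _

theorem trace_sol (f : ℝ → ℝ → ℝ) :
    trace (sol U V p q f) = ((∑ i, ∑ j, wt U V i j * f (p i) (q j) : ℝ) : ℂ) := by
  rw [sol, trace_mul_cycle, trace_mul_comm, trace]
  have h : Vᴴ * U = (Uᴴ * V)ᴴ := by simp
  rw [h]
  push_cast
  refine Finset.sum_congr rfl fun i _ => ?_
  rw [diag_apply, mul_apply]
  refine Finset.sum_congr rfl fun j _ => ?_
  rw [conjTranspose_apply, of_apply, wt, Complex.normSq_eq_conj_mul_self]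
  simp only [Complex.star_def]; ring

theorem sum_wt_left (hU : Uᴴ * U = 1) (hV : Vᴴ * V = 1) (i : n) : ∑ j, wt U V i j = 1 := by
  have h : (Uᴴ * V) * (Uᴴ * V)ᴴ = 1 := by
    rw [conjTranspose_mul, conjTranspose_conjTranspose]
    calc _ = Uᴴ * (V * Vᴴ) * U := by simp only [mul_assoc]
      _ = 1 := by rw [mul_eq_one_comm.mp hV, mul_one, hU]
  have h2 := congrFun (congrFun h i) i
  rw [mul_apply, one_apply_eq] at h2
  have h3 : ((∑ j, wt U V i j : ℝ) : ℂ) = 1 := by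
    rw [← h2]; push_cast
    refine Finset.sum_congr rfl fun j _ => ?_
    rw [conjTranspose_apply, wt, ← Complex.mul_conj]; rfl
  exact_mod_cast h3

theorem sol_tendsto {l : Filter ℝ} {F : ℝ → ℝ → ℝ → ℝ} {f : ℝ → ℝ → ℝ}
    (h : ∀ i j, (Uᴴ * V) i j ≠ 0 →
      Filter.Tendsto (fun T => F T (p i) (q j)) l (nhds (f (p i) (q j)))) :
    Filter.Tendsto (fun T => sol U V p q (F T)) l (nhds (sol U V p q f)) := by
  unfold sol
  have key : Filter.Tendsto
      (fun T => (of fun i j => (F T (p i) (q j) : ℂ) * (Uᴴ * V) i j : Matrix n n ℂ)) l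
      (nhds (of fun i j => (f (p i) (q j) : ℂ) * (Uᴴ * V) i j)) := by
    refine tendsto_pi_nhds.mpr fun i => tendsto_pi_nhds.mpr fun j => ?_
    by_cases hij : (Uᴴ * V) i j = 0
    · simp only [of_apply, hij, mul_zero]; exact tendsto_const_nhds
    · exact ((Complex.continuous_ofReal.tendsto _).comp (h i j hij)).mul_const _
  have hc : Continuous fun X : Matrix n n ℂ => U * X * Vᴴ := by fun_prop
  exact (hc.tendsto _).comp key

end Sol

section Psd

variable {n m : Type*} [Fintype n] [DecidableEq n] [Fintype m] [DecidableEq m]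

theorem IsDiag.nonneg {M U : Matrix n n ℂ} {p : n → ℝ} (h : IsDiag M U p) (hM : M.PosSemidef)
    (i : n) : 0 ≤ p i := by
  have h1 : Uᴴ * M * U = diagonal (fun i => (p i : ℂ)) := by
    rw [h.eq]
    calc _ = (Uᴴ * U) * diagonal (fun i => (p i : ℂ)) * (Uᴴ * U) := by simp only [mul_assoc]
      _ = _ := by rw [h.left]; simp
  have h2 := hM.conjTranspose_mul_mul_same U
  rw [h1] at h2
  have := h2.diag_nonneg (i := i)
  simpa using this

theorem IsDiag.posSemidef {M U : Matrix n n ℂ} {p : n → ℝ} (h : IsDiag M U p)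
    (hp : ∀ i, 0 ≤ p i) : M.PosSemidef := by
  rw [h.eq]
  apply PosSemidef.mul_mul_conjTranspose_same
  exact PosSemidef.diagonal (fun i => by simpa using hp i)

/-- A positive semidefinite matrix has a square root. -/
theorem exists_sqrt {M : Matrix n n ℂ} (hM : M.PosSemidef) :
    ∃ K : Matrix n n ℂ, Kᴴ = K ∧ K * K = M := by
  refine ⟨fn Real.sqrt M, fn_isHermitian hM.isHermitian _, ?_⟩
  rw [fn_mul hM.isHermitian]
  conv_rhs => rw [← fn_id hM.isHermitian]
  exact fn_congr _ fun i => Real.mul_self_sqrt ((exists_isDiag hM.isHermitian).nonneg hM i)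

theorem mul_eq_zero_of_trace {M : Matrix n n ℂ} (hM : M.PosSemidef) {Z : Matrix n m ℂ}
    (h : trace (Zᴴ * M * Z) = 0) : M * Z = 0 := by
  obtain ⟨K, hK, rfl⟩ := exists_sqrt hM
  have h1 : (K * Z)ᴴ * (K * Z) = Zᴴ * (K * K) * Z := by
    rw [conjTranspose_mul, hK]; simp only [Matrix.mul_assoc]
  rw [← h1, trace_conjTranspose_mul_self_eq_zero_iff] at h
  rw [Matrix.mul_assoc, h, Matrix.mul_zero]

theorem mul_eq_zero_of_trace' {M : Matrix n n ℂ} (hM : M.PosSemidef) {Z : Matrix m n ℂ}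
    (h : trace (Z * M * Zᴴ) = 0) : Z * M = 0 := by
  have h1 : M * Zᴴ = 0 := mul_eq_zero_of_trace hM (by simpa using h)
  have h2 := congrArg conjTranspose h1
  simpa [hM.isHermitian.eq] using h2

theorem trace_sandwich_nonneg {M : Matrix n n ℂ} (hM : M.PosSemidef) (Z : Matrix n m ℂ) :
    0 ≤ (trace (Zᴴ * M * Z)).re :=
  (Complex.le_def.mp (hM.conjTranspose_mul_mul_same Z).trace_nonneg).1

theorem eq_zero_of_re {M : Matrix n n ℂ} (hM : M.PosSemidef) (h : (trace M).re = 0) :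
    trace M = 0 := by
  have h2 := Complex.le_def.mp hM.trace_nonneg
  exact Complex.ext h h2.2.symm

end Psd

/-! ### Equality in the monotonicity of relative entropy -/

section Scalar

open Filter Topology

theorem hasDerivAt_term {p q T : ℝ} (hp : 0 ≤ p) (hq : 0 ≤ q) (hT : 0 < T) :
    HasDerivAt (fun T => -(p * Real.log (p + T * q))) ((p * (p / (p + T * q)) - p) / T) T := by
  rcases hp.eq_or_lt with rfl | hp
  · simpa using hasDerivAt_const T (0 : ℝ)
  · have hpos : 0 < p + T * q := by positivity
    have h1 : HasDerivAt (fun T => p + T * q) q T := by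
      simpa using ((hasDerivAt_id T).mul_const q).const_add p
    have h2 := ((h1.log hpos.ne').const_mul p).neg
    refine h2.congr_deriv ?_
    field_simp
    ring

theorem tendsto_term_zero {p q : ℝ} :
    Tendsto (fun T => -(p * Real.log (p + T * q))) (𝓝[>] 0) (𝓝 (-(p * Real.log p))) := by
  by_cases hp : p = 0
  · subst hp; simp only [zero_mul, neg_zero]; exact tendsto_const_nhds
  · have h : ContinuousAt (fun T : ℝ => -(p * Real.log (p + T * q))) 0 := by
      refine ((ContinuousAt.log (by fun_prop) (by simpa using hp)).const_mul p).neg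
    have h2 := h.tendsto.mono_left (nhdsWithin_le_nhds (s := Set.Ioi 0))
    simpa using h2

/-- Here `q = 0 → p = 0` expresses `supp ρ ⊆ supp σ` on eigenvalues; without it the limit would be
infinite while `log 0 = 0` makes the right-hand side finite. -/
theorem tendsto_term_top {p q : ℝ} (hp : 0 ≤ p) (hq : 0 ≤ q) (hpq : q = 0 → p = 0) :
    Tendsto (fun T => -(p * Real.log (p + T * q)) + p * Real.log T) atTop
      (𝓝 (-(p * Real.log q))) := by
  by_cases hp0 : p = 0
  · subst hp0; simp only [zero_mul, neg_zero, add_zero]; exact tendsto_const_nhds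
  have hq0 : 0 < q := lt_of_le_of_ne hq fun h => hp0 (hpq h.symm)
  have h1 : Tendsto (fun T : ℝ => -(p * Real.log (p * T⁻¹ + q))) atTop
      (𝓝 (-(p * Real.log (p * 0 + q)))) := by
    refine ((Tendsto.log ((tendsto_inv_atTop_zero.const_mul p).add_const q) ?_).const_mul p).neg
    simpa using hq0.ne'
  rw [mul_zero, zero_add] at h1
  refine h1.congr' ?_
  filter_upwards [eventually_gt_atTop 0] with T hT
  have : p * T⁻¹ + q = (p + T * q) / T := by field_simp
  rw [this, Real.log_div (by positivity) hT.ne']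
  ring

theorem tendsto_ratio_zero {p q : ℝ} :
    Tendsto (fun T => p / (p + T * q)) (𝓝[>] 0) (𝓝 (if p = 0 then 0 else 1)) := by
  by_cases hp : p = 0
  · subst hp; simp
  · have h : ContinuousAt (fun T : ℝ => p / (p + T * q)) 0 := by
      refine ContinuousAt.div (by fun_prop) (by fun_prop) (by simpa using hp)
    have h2 := h.tendsto.mono_left (nhdsWithin_le_nhds (s := Set.Ioi 0))
    simpa [hp] using h2

theorem tendsto_ratio_top {p q : ℝ} (hpq : q = 0 → p = 0) :
    Tendsto (fun T => T * (p / (p + T * q))) atTop (𝓝 (p * q⁻¹)) := by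
  by_cases hq : q = 0
  · simp [hpq hq]
  have h1 : Tendsto (fun T : ℝ => p / (p * T⁻¹ + q)) atTop (𝓝 (p / (p * 0 + q))) := by
    refine Tendsto.div tendsto_const_nhds ((tendsto_inv_atTop_zero.const_mul p).add_const q) ?_
    simpa using hq
  rw [mul_zero, zero_add, div_eq_mul_inv] at h1
  refine h1.congr' ?_
  filter_upwards [eventually_gt_atTop 0] with T hT
  have : p * T⁻¹ + q = (p + T * q) / T := by field_simp
  rw [this, div_div_eq_mul_div, mul_div_assoc, mul_comm p, div_mul_eq_mul_div, mul_div_assoc]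

/-- A function on `(0, ∞)` with nonnegative derivative `M T / T` and the same limit at both ends
has `M = 0`. -/
theorem eq_zero_of_limits {H M : ℝ → ℝ} {c : ℝ} (hd : ∀ T, 0 < T → HasDerivAt H (M T / T) T)
    (hM : ∀ T, 0 < T → 0 ≤ M T) (h0 : Tendsto H (𝓝[>] 0) (𝓝 c)) (h1 : Tendsto H atTop (𝓝 c))
    {T : ℝ} (hT : 0 < T) : M T = 0 := by
  have mono : MonotoneOn H (Set.Ioi 0) := by
    refine monotoneOn_of_deriv_nonneg (convex_Ioi 0)
      (fun x hx => (hd x hx).continuousAt.continuousWithinAt) ?_ ?_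
    · rw [interior_Ioi]
      exact fun x hx => (hd x hx).differentiableAt.differentiableWithinAt
    · rw [interior_Ioi]
      intro x hx
      rw [(hd x hx).deriv]
      exact div_nonneg (hM x hx) (le_of_lt hx)
  have const : ∀ x, 0 < x → H x = c := by
    intro x hx
    apply le_antisymm
    · refine ge_of_tendsto h1 ?_
      filter_upwards [eventually_ge_atTop x] with y hy
      exact mono hx (lt_of_lt_of_le hx hy) hy
    · refine le_of_tendsto h0 ?_
      filter_upwards [Ioo_mem_nhdsGT hx] with y hy
      exact mono hy.1 hx hy.2.le
  have h2 : HasDerivAt H 0 T := by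
    refine (hasDerivAt_const T c).congr_of_eventuallyEq ?_
    filter_upwards [lt_mem_nhds hT] with y hy using const y hy
  have h3 := (hd T hT).unique h2
  rcases div_eq_zero_iff.mp h3 with h | h
  · exact h
  · exact absurd h hT.ne'

end Scalar

section Recovery

open Filter Topology

variable {n m : Type*} [Fintype n] [DecidableEq n] [Fintype m] [DecidableEq m]

/-- Completing the square in the variational formula for `⟨ρ, (L_ρ + T R_σ)⁻¹ ρ⟩`. -/
theorem square_identity (ι : Matrix m m ℂ →⋆ₐ[ℂ] Matrix n n ℂ) {ρ σ x : Matrix n n ℂ}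
    {ρ' σ' x' : Matrix m m ℂ} {T : ℝ}
    (hρ : ρ.IsHermitian) (hσ : σ.IsHermitian) (hρ' : ρ'.IsHermitian)
    (dρ : ∀ Z, trace (ι Z * ρ) = trace (Z * ρ')) (dσ : ∀ Z, trace (ι Z * σ) = trace (Z * σ'))
    (hx : ρ * x + (T : ℂ) • (x * σ) = ρ) (hx' : ρ' * x' + (T : ℂ) • (x' * σ') = ρ') :
    (trace ((x - ι x')ᴴ * ρ * (x - ι x'))).re + T * (trace ((x - ι x') * σ * (x - ι x')ᴴ)).re
      = (trace (ρ * x)).re - (trace (ρ' * x')).re := by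
  have hstar : (ι x')ᴴ = ι x'ᴴ := (map_star ι x').symm
  have conj_re : ∀ M : Matrix n n ℂ, (trace Mᴴ).re = (trace M).re := by
    intro M; rw [trace_conjTranspose]; simp
  have conj_re' : ∀ M : Matrix m m ℂ, (trace Mᴴ).re = (trace M).re := by
    intro M; rw [trace_conjTranspose]; simp
  have e1 : (trace (xᴴ * ρ * x)).re + T * (trace (x * σ * xᴴ)).re = (trace (ρ * x)).re := by
    have := congrArg (fun M => (trace (xᴴ * M)).re) hx
    simp only [mul_add, trace_add, mul_smul_comm, trace_smul, Complex.add_re, smul_eq_mul,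
      Complex.re_ofReal_mul] at this
    rw [trace_mul_comm (x * σ), mul_assoc, this, ← conj_re]
    simp [hρ.eq]
  have e2 : (trace ((ι x')ᴴ * ρ * x)).re + T * (trace (x * σ * (ι x')ᴴ)).re
      = (trace (ρ' * x')).re := by
    have := congrArg (fun M => (trace ((ι x')ᴴ * M)).re) hx
    simp only [mul_add, trace_add, mul_smul_comm, trace_smul, Complex.add_re, smul_eq_mul,
      Complex.re_ofReal_mul] at this
    rw [trace_mul_comm (x * σ), mul_assoc, this, hstar, dρ, ← conj_re']
    simp [hρ'.eq]
  have e3 : (trace (xᴴ * ρ * ι x')).re + T * (trace (ι x' * σ * xᴴ)).re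
      = (trace (ρ' * x')).re := by
    rw [← e2, ← conj_re, ← conj_re (ι x' * σ * xᴴ)]
    simp [hρ.eq, hσ.eq, mul_assoc]
  have e4 : (trace ((ι x')ᴴ * ρ * ι x')).re + T * (trace (ι x' * σ * (ι x')ᴴ)).re
      = (trace (ρ' * x')).re := by
    have := congrArg (fun M => (trace (x'ᴴ * M)).re) hx'
    simp only [mul_add, trace_add, mul_smul_comm, trace_smul, Complex.add_re, smul_eq_mul,
      Complex.re_ofReal_mul] at this
    have f1 : trace ((ι x')ᴴ * ρ * ι x') = trace (x'ᴴ * (ρ' * x')) := by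
      rw [trace_mul_cycle, hstar, ← map_mul, dρ, trace_mul_comm, ← mul_assoc,
        trace_mul_comm]
    have f2 : trace (ι x' * σ * (ι x')ᴴ) = trace (x'ᴴ * (x' * σ')) := by
      rw [trace_mul_cycle, hstar, ← map_mul, dσ, mul_assoc]
    rw [f1, f2, this, ← conj_re']
    simp [hρ'.eq]
  simp only [conjTranspose_sub, sub_mul, mul_sub, trace_sub, Complex.sub_re]
  linarith

theorem sol_entry_eq_zero {U V : Matrix n n ℂ} {p q : n → ℝ} (hU : Uᴴ * U = 1) (hV : Vᴴ * V = 1)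
    {f : ℝ → ℝ → ℝ} (h : sol U V p q f = 0) {i j : n} (hij : (Uᴴ * V) i j ≠ 0) :
    f (p i) (q j) = 0 := by
  have h1 : Uᴴ * sol U V p q f * V = of fun i j => (f (p i) (q j) : ℂ) * (Uᴴ * V) i j := by
    rw [sol]
    calc _ = (Uᴴ * U) * (of fun i j => (f (p i) (q j) : ℂ) * (Uᴴ * V) i j) * (Vᴴ * V) := by
          simp only [mul_assoc]
      _ = _ := by rw [hU, hV, one_mul, mul_one]
  rw [h] at h1
  have h2 := congrFun (congrFun h1 i) j
  simpa [hij] using h2.symm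

/-- Indicator of zero. -/
noncomputable def ker0 (x : ℝ) : ℝ := if x = 0 then 1 else 0

/-- Indicator of nonzero numbers. -/
noncomputable def sup0 (x : ℝ) : ℝ := if x = 0 then 0 else 1

/-- Pseudo-inverse of a Hermitian matrix. -/
noncomputable def pinv (M : Matrix n n ℂ) : Matrix n n ℂ := fn (fun x => x⁻¹) M

/-- The real function `T ↦ -Σ w p log(p + T q)`. It interpolates between the entropy of `ρ`, its
limit at `0`, and the cross entropy `-Tr ρ log σ`, its limit at `∞` once the divergent term
`-Tr ρ · log T` is removed. -/
noncomputable def interp (U V : Matrix n n ℂ) (p q : n → ℝ) (T : ℝ) : ℝ :=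
  ∑ i, ∑ j, wt U V i j * -(p i * Real.log (p i + T * q j))

/-- A diagonalized pair of positive matrices `ρ`, `σ` with `supp ρ ⊆ supp σ`. -/
structure PairDiag (ρ σ U V : Matrix n n ℂ) (p q : n → ℝ) : Prop where
  dρ : IsDiag ρ U p
  dσ : IsDiag σ V q
  hp : ∀ i, 0 ≤ p i
  hq : ∀ i, 0 ≤ q i
  supp : ∀ i j, (Uᴴ * V) i j ≠ 0 → q j = 0 → p i = 0

theorem exists_pairDiag {ρ σ : Matrix n n ℂ} (hρ : ρ.PosSemidef) (hσ : σ.PosSemidef)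
    (hs : ρ * fn ker0 σ = 0) : ∃ U V p q, PairDiag ρ σ U V p q := by
  have d1 := exists_isDiag hρ.isHermitian
  have d2 := exists_isDiag hσ.isHermitian
  refine ⟨_, _, _, _, d1, d2, d1.nonneg hρ, d2.nonneg hσ, fun i j hij hq => ?_⟩
  have h0 : ρ * fn ker0 σ = sol (hρ.isHermitian.eigenvectorUnitary : Matrix n n ℂ)
      (hσ.isHermitian.eigenvectorUnitary : Matrix n n ℂ) hρ.isHermitian.eigenvalues
      hσ.isHermitian.eigenvalues (fun x y => x * ker0 y) := by
    rw [← fn_mul_fn_eq_sol d1 d2 (fun x => x) ker0, fn_id hρ.isHermitian]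
  rw [h0] at hs
  have := sol_entry_eq_zero d1.left d2.left hs hij
  simpa [ker0, hq] using this

variable {ρ σ U V : Matrix n n ℂ} {p q : n → ℝ}

theorem PairDiag.sol_eq (h : PairDiag ρ σ U V p q) {T : ℝ} (hT : 0 < T) :
    ρ * sol U V p q (fun x y => x / (x + T * y)) +
      (T : ℂ) • (sol U V p q (fun x y => x / (x + T * y)) * σ) = ρ := by
  rw [mul_sol h.dρ, sol_mul h.dσ, ← sol_smul, ← sol_add]
  conv_rhs => rw [← fn_id h.dρ.isHermitian, ← sol_fst h.dρ h.dσ]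
  refine sol_congr fun i j _ => ?_
  have h1 := h.hp i
  have h2 := mul_nonneg hT.le (h.hq j)
  by_cases h0 : p i + T * q j = 0
  · have : p i = 0 := by linarith
    simp [this]
  · field_simp

theorem PairDiag.interp_deriv (h : PairDiag ρ σ U V p q) {T : ℝ} (hT : 0 < T) :
    HasDerivAt (interp U V p q)
      (((trace (ρ * sol U V p q (fun x y => x / (x + T * y)))).re - (trace ρ).re) / T) T := by
  have h1 : HasDerivAt (interp U V p q) (∑ i, ∑ j, wt U V i j *
      ((p i * (p i / (p i + T * q j)) - p i) / T)) T := by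
    unfold interp
    refine HasDerivAt.fun_sum fun i _ => HasDerivAt.fun_sum fun j _ => ?_
    exact (hasDerivAt_term (h.hp i) (h.hq j) hT).const_mul _
  convert h1 using 1
  have h2 : trace ρ = trace (sol U V p q fun x _ => x) := by
    rw [sol_fst h.dρ h.dσ, fn_id h.dρ.isHermitian]
  rw [mul_sol h.dρ, h2, trace_sol, trace_sol, Complex.ofReal_re, Complex.ofReal_re,
    ← Finset.sum_sub_distrib, Finset.sum_div]
  refine Finset.sum_congr rfl fun i _ => ?_
  rw [← Finset.sum_sub_distrib, Finset.sum_div]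
  refine Finset.sum_congr rfl fun j _ => ?_
  ring

theorem PairDiag.interp_zero (h : PairDiag ρ σ U V p q) :
    Tendsto (interp U V p q) (𝓝[>] 0) (𝓝 (ent ρ)) := by
  have h1 : ent ρ = ∑ i, ∑ j, wt U V i j * -(p i * Real.log (p i)) := by
    rw [h.dρ.ent_eq, ← Finset.sum_neg_distrib]
    refine Finset.sum_congr rfl fun i _ => ?_
    rw [← Finset.sum_mul, sum_wt_left h.dρ.left h.dσ.left, one_mul]
  rw [h1]
  unfold interp
  exact tendsto_finsetSum _ fun i _ => tendsto_finsetSum _ fun j _ =>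
    tendsto_term_zero.const_mul _

theorem PairDiag.interp_top (h : PairDiag ρ σ U V p q) :
    Tendsto (fun T => interp U V p q T + (trace ρ).re * Real.log T) atTop
      (𝓝 (-(trace (ρ * fn Real.log σ)).re)) := by
  have h2 : trace ρ = trace (sol U V p q fun x _ => x) := by
    rw [sol_fst h.dρ h.dσ, fn_id h.dρ.isHermitian]
  have h1 : ρ * fn Real.log σ = sol U V p q (fun x y => x * Real.log y) := by
    rw [← fn_mul_fn_eq_sol h.dρ h.dσ (fun x => x), fn_id h.dρ.isHermitian]
  have h3 : ∀ T, interp U V p q T + (trace ρ).re * Real.log T = ∑ i, ∑ j, wt U V i j *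
      (-(p i * Real.log (p i + T * q j)) + p i * Real.log T) := by
    intro T
    rw [h2, trace_sol, Complex.ofReal_re, interp, Finset.sum_mul, ← Finset.sum_add_distrib]
    refine Finset.sum_congr rfl fun i _ => ?_
    rw [Finset.sum_mul, ← Finset.sum_add_distrib]
    refine Finset.sum_congr rfl fun j _ => ?_
    ring
  simp only [h3]
  rw [h1, trace_sol, Complex.ofReal_re, ← Finset.sum_neg_distrib]
  refine tendsto_finsetSum _ fun i _ => ?_
  rw [← Finset.sum_neg_distrib]
  refine tendsto_finsetSum _ fun j _ => ?_
  by_cases hij : (Uᴴ * V) i j = 0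
  · simp [wt, hij]
  · rw [← mul_neg]
    exact (tendsto_term_top (h.hp i) (h.hq j) (h.supp i j hij)).const_mul _

theorem PairDiag.tendsto_zero (h : PairDiag ρ σ U V p q) :
    Tendsto (fun T : ℝ => sol U V p q (fun x y => x / (x + T * y))) (𝓝[>] 0)
      (𝓝 (fn sup0 ρ)) := by
  rw [← sol_fst h.dρ h.dσ]
  exact sol_tendsto fun i j _ => tendsto_ratio_zero

theorem PairDiag.tendsto_top (h : PairDiag ρ σ U V p q) :
    Tendsto (fun T : ℝ => (T : ℂ) • sol U V p q (fun x y => x / (x + T * y))) atTop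
      (𝓝 (ρ * pinv σ)) := by
  have h1 : ρ * pinv σ = sol U V p q (fun x y => x * y⁻¹) := by
    rw [pinv, ← fn_mul_fn_eq_sol h.dρ h.dσ (fun x => x), fn_id h.dρ.isHermitian]
  simp only [← sol_smul, h1]
  exact sol_tendsto fun i j hij => tendsto_ratio_top (h.supp i j hij)

/-- Equality in the monotonicity of relative entropy under the conditional expectation dual to `ι`
forces the resolvents of the full and reduced pairs to agree on the supports; the three
conclusions are the limits `T → ∞` and `T → 0`. -/
theorem recovery (ι : Matrix m m ℂ →⋆ₐ[ℂ] Matrix n n ℂ) {ρ' σ' : Matrix m m ℂ}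
    (hρ : ρ.PosSemidef) (hσ : σ.PosSemidef) (hρ' : ρ'.PosSemidef) (hσ' : σ'.PosSemidef)
    (hs : ρ * fn ker0 σ = 0) (hs' : ρ' * fn ker0 σ' = 0)
    (dρ : ∀ Z, trace (ι Z * ρ) = trace (Z * ρ')) (dσ : ∀ Z, trace (ι Z * σ) = trace (Z * σ'))
    (hS : ent ρ + (trace (ρ * fn Real.log σ)).re = ent ρ' + (trace (ρ' * fn Real.log σ')).re) :
    ρ * pinv σ * σ = ι (ρ' * pinv σ') * σ ∧ ρ * (ρ * pinv σ) = ρ * ι (ρ' * pinv σ') ∧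
      fn sup0 ρ * σ = ι (fn sup0 ρ') * σ := by
  obtain ⟨U, V, p, q, h⟩ := exists_pairDiag hρ hσ hs
  obtain ⟨U', V', p', q', h'⟩ := exists_pairDiag hρ' hσ' hs'
  set x : ℝ → Matrix n n ℂ := fun T => sol U V p q (fun x y => x / (x + T * y)) with hx
  set x' : ℝ → Matrix m m ℂ := fun T => sol U' V' p' q' (fun x y => x / (x + T * y)) with hx'
  have htr : trace ρ = trace ρ' := by simpa using dρ 1
  have nn : ∀ T, 0 < T → 0 ≤ (trace (ρ * x T)).re - (trace (ρ' * x' T)).re := by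
    intro T hT
    rw [← square_identity ι hρ.isHermitian hσ.isHermitian hρ'.isHermitian dρ dσ (h.sol_eq hT)
      (h'.sol_eq hT)]
    have a1 := trace_sandwich_nonneg hρ (x T - ι (x' T))
    have a2 := trace_sandwich_nonneg hσ (x T - ι (x' T))ᴴ
    rw [conjTranspose_conjTranspose] at a2
    have := mul_nonneg hT.le a2
    linarith
  have eq0 : ∀ T, 0 < T → (trace (ρ * x T)).re - (trace (ρ' * x' T)).re = 0 := by
    intro T hT
    refine eq_zero_of_limits (H := fun T => interp U V p q T - interp U' V' p' q' T)
      (M := fun T => (trace (ρ * x T)).re - (trace (ρ' * x' T)).re) (c := ent ρ - ent ρ')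
      ?_ nn (h.interp_zero.sub h'.interp_zero) ?_ hT
    · intro T hT
      refine ((h.interp_deriv hT).sub (h'.interp_deriv hT)).congr_deriv ?_
      rw [htr]; ring
    · have := h.interp_top.sub h'.interp_top
      rw [htr] at this
      have e : -(trace (ρ * fn Real.log σ)).re - -(trace (ρ' * fn Real.log σ')).re
        = ent ρ - ent ρ' := by linarith
      rw [e] at this
      refine this.congr fun T => ?_
      ring
  have key : ∀ T, 0 < T → ρ * (x T - ι (x' T)) = 0 ∧ (x T - ι (x' T)) * σ = 0 := by
    intro T hT
    have e := square_identity ι hρ.isHermitian hσ.isHermitian hρ'.isHermitian dρ dσ (h.sol_eq hT)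
      (h'.sol_eq hT)
    have a1 := trace_sandwich_nonneg hρ (x T - ι (x' T))
    have a2 := trace_sandwich_nonneg hσ (x T - ι (x' T))ᴴ
    rw [conjTranspose_conjTranspose] at a2
    have e0 := eq0 T hT
    have a3 := mul_nonneg hT.le a2
    simp only [hx, hx'] at e0 a1 a2 a3
    rw [e0] at e
    refine ⟨mul_eq_zero_of_trace hρ (eq_zero_of_re (hρ.conjTranspose_mul_mul_same _) ?_),
      mul_eq_zero_of_trace' hσ (eq_zero_of_re (hσ.mul_mul_conjTranspose_same _) ?_)⟩
    · simp only [hx, hx']; linarith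
    · simp only [hx, hx']
      have : T * (trace ((sol U V p q (fun x y => x / (x + T * y)) - ι (sol U' V' p' q' fun x y =>
        x / (x + T * y))) * σ * (sol U V p q (fun x y => x / (x + T * y)) -
        ι (sol U' V' p' q' fun x y => x / (x + T * y)))ᴴ)).re = 0 := by linarith
      exact (mul_eq_zero.mp this).resolve_left hT.ne'
  have cι : Continuous ι := LinearMap.continuous_of_finiteDimensional ι.toAlgHom.toLinearMap
  have lim0 : Tendsto (fun T => x T - ι (x' T)) (𝓝[>] 0) (𝓝 (fn sup0 ρ - ι (fn sup0 ρ'))) :=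
    h.tendsto_zero.sub ((cι.tendsto _).comp h'.tendsto_zero)
  have lim1 : Tendsto (fun T : ℝ => (T : ℂ) • (x T - ι (x' T))) atTop
      (𝓝 (ρ * pinv σ - ι (ρ' * pinv σ'))) := by
    have := h.tendsto_top.sub ((cι.tendsto _).comp h'.tendsto_top)
    refine this.congr fun T => ?_
    simp only [Function.comp_apply, map_smul, smul_sub, hx, hx']
  have z1 : (fn sup0 ρ - ι (fn sup0 ρ')) * σ = 0 := by
    refine tendsto_nhds_unique (((continuous_id.matrix_mul continuous_const).tendsto _).comp lim0)
      (tendsto_const_nhds.congr' ?_)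
    filter_upwards [self_mem_nhdsWithin] with T hT
    exact ((key T hT).2).symm
  have z2 : (ρ * pinv σ - ι (ρ' * pinv σ')) * σ = 0 := by
    refine tendsto_nhds_unique (((continuous_id.matrix_mul continuous_const).tendsto _).comp lim1)
      (tendsto_const_nhds.congr' ?_)
    filter_upwards [eventually_gt_atTop 0] with T hT
    simp only [Function.comp_apply, id, Matrix.smul_mul, (key T hT).2, smul_zero]
  have z3 : ρ * (ρ * pinv σ - ι (ρ' * pinv σ')) = 0 := by
    refine tendsto_nhds_unique (((continuous_const.matrix_mul continuous_id).tendsto _).comp lim1)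
      (tendsto_const_nhds.congr' ?_)
    filter_upwards [eventually_gt_atTop 0] with T hT
    simp only [Function.comp_apply, id, Matrix.mul_smul, (key T hT).1, smul_zero]
  rw [sub_mul, sub_eq_zero] at z1 z2
  rw [mul_sub, sub_eq_zero] at z3
  exact ⟨z2, z3, z1⟩

end Recovery

/-! ### Partial traces and quantum Markov chains -/

theorem IsDiag.conj_eq {m : Type*} [Fintype m] [DecidableEq m] {M U : Matrix m m ℂ} {p : m → ℝ}
    (d : IsDiag M U p) : Uᴴ * M * U = diagonal (fun i => (p i : ℂ)) := by
  rw [d.eq]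
  calc _ = (Uᴴ * U) * diagonal (fun i => (p i : ℂ)) * (Uᴴ * U) := by simp only [mul_assoc]
    _ = _ := by rw [d.left]; simp

section Adjoint

variable {n m k : Type*} [Fintype n] [DecidableEq n] [Fintype m] [DecidableEq m]
  [Fintype k] [DecidableEq k]

/-- The trace-dual of an inclusion of matrix algebras: for the inclusion `Z ↦ Z ⊗ 1` this is the
partial trace. -/
noncomputable def marg (j : Matrix m m ℂ →⋆ₐ[ℂ] Matrix n n ℂ) (M : Matrix n n ℂ) :
    Matrix m m ℂ := of fun x y => trace (j (single y x 1) * M)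

theorem trace_mul_marg (j : Matrix m m ℂ →⋆ₐ[ℂ] Matrix n n ℂ) (M : Matrix n n ℂ)
    (Z : Matrix m m ℂ) : trace (j Z * M) = trace (Z * marg j M) := by
  have h : Z = ∑ x, ∑ y, Z x y • single x y (1 : ℂ) := by
    conv_lhs => rw [matrix_eq_sum_single Z]
    simp
  conv_lhs => rw [h]
  simp only [map_sum, map_smul, Finset.sum_mul, trace_sum, smul_mul_assoc, trace_smul, smul_eq_mul]
  simp only [trace, diag_apply, mul_apply, marg, of_apply]

/-- Matrices are determined by their trace pairings. -/
theorem ext_trace {M N : Matrix m m ℂ} (h : ∀ Z, trace (Z * M) = trace (Z * N)) : M = N := by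
  ext x y
  have := h (single y x 1)
  rwa [trace_single_mul, trace_single_mul, one_smul, one_smul] at this

theorem marg_unique (j : Matrix m m ℂ →⋆ₐ[ℂ] Matrix n n ℂ) {M : Matrix n n ℂ} {N : Matrix m m ℂ}
    (h : ∀ Z, trace (j Z * M) = trace (Z * N)) : marg j M = N :=
  ext_trace fun Z => by rw [← trace_mul_marg, h]

theorem trace_marg (j : Matrix m m ℂ →⋆ₐ[ℂ] Matrix n n ℂ) (M : Matrix n n ℂ) :
    trace (marg j M) = trace M := by
  simpa using (trace_mul_marg j M 1).symm

theorem marg_mul_left (j : Matrix m m ℂ →⋆ₐ[ℂ] Matrix n n ℂ) (M : Matrix n n ℂ)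
    (W : Matrix m m ℂ) : marg j (j W * M) = W * marg j M :=
  marg_unique j fun Z => by rw [← mul_assoc, ← map_mul, trace_mul_marg, mul_assoc]

theorem marg_mul_right (j : Matrix m m ℂ →⋆ₐ[ℂ] Matrix n n ℂ) (M : Matrix n n ℂ)
    (W : Matrix m m ℂ) : marg j (M * j W) = marg j M * W :=
  marg_unique j fun Z => by
    rw [← mul_assoc, trace_mul_comm, ← mul_assoc, ← map_mul, trace_mul_marg, mul_assoc,
      trace_mul_comm, mul_assoc]

theorem map_conjTranspose (j : Matrix m m ℂ →⋆ₐ[ℂ] Matrix n n ℂ) (Z : Matrix m m ℂ) :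
    j Zᴴ = (j Z)ᴴ := map_star j Z

theorem marg_conjTranspose (j : Matrix m m ℂ →⋆ₐ[ℂ] Matrix n n ℂ) (M : Matrix n n ℂ) :
    marg j Mᴴ = (marg j M)ᴴ :=
  marg_unique j fun Z => by
    have h1 : j Z * Mᴴ = (M * j Zᴴ)ᴴ := by simp [map_conjTranspose]
    have h2 : Z * (marg j M)ᴴ = (marg j M * Zᴴ)ᴴ := by simp
    rw [h1, h2, trace_conjTranspose, trace_conjTranspose, trace_mul_comm, trace_mul_marg,
      trace_mul_comm]

/-- A matrix commuting with the subalgebra moves around the partial trace. -/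
theorem marg_mul_comm (j : Matrix m m ℂ →⋆ₐ[ℂ] Matrix n n ℂ) (M : Matrix n n ℂ)
    {X : Matrix n n ℂ} (hX : ∀ Z, Commute X (j Z)) : marg j (X * M) = marg j (M * X) :=
  marg_unique j fun Z => by
    rw [← trace_mul_marg, ← mul_assoc, ← mul_assoc, ← (hX Z).eq, mul_assoc, trace_mul_comm]

theorem marg_posSemidef (j : Matrix m m ℂ →⋆ₐ[ℂ] Matrix n n ℂ) {M : Matrix n n ℂ}
    (hM : M.PosSemidef) : (marg j M).PosSemidef := by
  have hH : (marg j M).IsHermitian := by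
    rw [IsHermitian, ← marg_conjTranspose, hM.isHermitian.eq]
  have d := exists_isDiag hH
  refine d.posSemidef fun i => ?_
  -- the `i`-th eigenvalue is the trace of `marg j M` against a rank one projection
  set U := (hH.eigenvectorUnitary : Matrix m m ℂ)
  have h1 : Uᴴ * marg j M * U = diagonal (fun i => (hH.eigenvalues i : ℂ)) :=
    d.conj_eq
  have h2 : trace (U * single i i 1 * Uᴴ * marg j M) = (hH.eigenvalues i : ℂ) := by
    rw [mul_assoc, trace_mul_comm, ← mul_assoc, h1, trace_mul_comm, trace_single_mul]
    simp
  have h3 : U * single i i (1 : ℂ) * Uᴴ = (single i i 1 * Uᴴ)ᴴ * (single i i 1 * Uᴴ) := by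
    rw [conjTranspose_mul, conjTranspose_conjTranspose, conjTranspose_single]
    have : single i i (1 : ℂ) * single i i (1 : ℂ) = single i i 1 := by simp
    simp only [star_one, mul_assoc]
    rw [← mul_assoc (single i i (1 : ℂ)) (single i i 1), this]
  rw [h3, ← trace_mul_marg, map_mul, map_conjTranspose, mul_assoc, trace_mul_comm] at h2
  have h4 := (hM.mul_mul_conjTranspose_same (j (single i i 1 * Uᴴ))).trace_nonneg
  rw [h2] at h4
  exact_mod_cast h4

theorem map_posSemidef (j : Matrix m m ℂ →⋆ₐ[ℂ] Matrix n n ℂ) {M : Matrix m m ℂ}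
    (hM : M.PosSemidef) : (j M).PosSemidef := by
  obtain ⟨K, hK, rfl⟩ := exists_sqrt hM
  have : j (K * K) = (j K)ᴴ * j K := by rw [map_mul, ← map_conjTranspose, hK]
  rw [this]
  exact posSemidef_conjTranspose_mul_self _

/-- The commuting product of positive semidefinite matrices is positive semidefinite. -/
theorem mul_posSemidef {P Q : Matrix n n ℂ} (hP : P.PosSemidef) (hQ : Q.PosSemidef)
    (h : Commute P Q) : (P * Q).PosSemidef := by
  have h1 : fn Real.sqrt P * fn Real.sqrt P = P := by
    rw [fn_mul hP.isHermitian]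
    conv_rhs => rw [← fn_id hP.isHermitian]
    exact fn_congr _ fun i => Real.mul_self_sqrt ((exists_isDiag hP.isHermitian).nonneg hP i)
  have h2 : P * Q = fn Real.sqrt P * Q * (fn Real.sqrt P)ᴴ := by
    rw [(fn_isHermitian hP.isHermitian Real.sqrt).eq, mul_assoc,
      ← (commute_fn hP.isHermitian h Real.sqrt).eq, ← mul_assoc, h1]
  rw [h2]
  exact hQ.mul_mul_conjTranspose_same _

/-- If `X` kills the marginal then it kills the state. -/
theorem mul_eq_zero_of_marg (j : Matrix m m ℂ →⋆ₐ[ℂ] Matrix n n ℂ) {M : Matrix n n ℂ}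
    (hM : M.PosSemidef) {X : Matrix m m ℂ} (h : X * marg j M = 0) : j X * M = 0 := by
  refine mul_eq_zero_of_trace' hM ?_
  rw [trace_mul_cycle, ← map_conjTranspose, ← map_mul, trace_mul_marg, mul_assoc, h]
  simp

theorem mul_eq_zero_of_marg' (j : Matrix m m ℂ →⋆ₐ[ℂ] Matrix n n ℂ) {M : Matrix n n ℂ}
    (hM : M.PosSemidef) {X : Matrix m m ℂ} (h : marg j M * X = 0) : M * j X = 0 := by
  have h1 : Xᴴ * marg j M = 0 := by
    have := congrArg conjTranspose h
    simpa [(marg_posSemidef j hM).isHermitian.eq] using this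
  have := congrArg conjTranspose (mul_eq_zero_of_marg j hM h1)
  simpa [hM.isHermitian.eq, map_conjTranspose] using this

theorem mul_ker0 {M : Matrix n n ℂ} (hM : M.IsHermitian) : M * fn ker0 M = 0 := by
  have : M * fn ker0 M = fn (fun x => x * ker0 x) M := by
    rw [← fn_mul hM, fn_id hM]
  rw [this, (exists_isDiag hM).fn_eq]
  have : ∀ x : ℝ, x * ker0 x = 0 := fun x => by by_cases h : x = 0 <;> simp [ker0, h]
  simp [this]

theorem mul_pinv {M : Matrix n n ℂ} (hM : M.IsHermitian) : M * pinv M = fn sup0 M := by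
  have : M * pinv M = fn (fun x => x * x⁻¹) M := by
    rw [pinv, ← fn_mul hM, fn_id hM]
  rw [this]
  exact fn_congr hM fun i => by
    by_cases h : hM.eigenvalues i = 0 <;> simp [sup0, h]

theorem pinv_mul {M : Matrix n n ℂ} (hM : M.IsHermitian) : pinv M * M = fn sup0 M := by
  rw [← mul_pinv hM, pinv]
  exact (commute_fn hM (Commute.refl M) _).eq

theorem ker0_add_sup0 {M : Matrix n n ℂ} (hM : M.IsHermitian) :
    fn ker0 M + fn sup0 M = 1 := by
  have d := exists_isDiag hM
  rw [d.fn_eq, d.fn_eq, ← add_mul, ← mul_add, diagonal_add]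
  have : ∀ x : ℝ, ((ker0 x : ℝ) : ℂ) + (sup0 x : ℝ) = 1 := fun x => by
    by_cases h : x = 0 <;> simp [ker0, sup0, h]
  simp [this, d.right]

theorem mul_sup0_of_ker0 {M N : Matrix n n ℂ} (hM : M.IsHermitian) (h : N * fn ker0 M = 0) :
    N * fn sup0 M = N := by
  have := congrArg (N * ·) (ker0_add_sup0 hM)
  simpa [mul_add, h] using this

theorem mul_sup0 {M : Matrix n n ℂ} (hM : M.IsHermitian) : M * fn sup0 M = M :=
  mul_sup0_of_ker0 hM (mul_ker0 hM)

theorem sup0_mul {M : Matrix n n ℂ} (hM : M.IsHermitian) : fn sup0 M * M = M := by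
  rw [(commute_fn hM (Commute.refl M) _).eq, mul_sup0 hM]

theorem pinv_isHermitian {M : Matrix n n ℂ} (hM : M.IsHermitian) : (pinv M).IsHermitian :=
  fn_isHermitian hM _

theorem pinv_posSemidef {M : Matrix n n ℂ} (hM : M.PosSemidef) : (pinv M).PosSemidef :=
  ((exists_isDiag hM.isHermitian).fn_diag _).posSemidef fun i =>
    inv_nonneg.mpr ((exists_isDiag hM.isHermitian).nonneg hM i)

theorem map_pinv (j : Matrix m m ℂ →⋆ₐ[ℂ] Matrix n n ℂ) {M : Matrix m m ℂ} (hM : M.IsHermitian) :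
    j (pinv M) = pinv (j M) := map_fn j hM _

section Support

variable (j : Matrix m m ℂ →⋆ₐ[ℂ] Matrix n n ℂ) {M : Matrix n n ℂ}

theorem mul_ker0_marg (hM : M.PosSemidef) : M * j (fn ker0 (marg j M)) = 0 :=
  mul_eq_zero_of_marg' j hM (mul_ker0 (marg_posSemidef j hM).isHermitian)

theorem mul_sup0_marg (hM : M.PosSemidef) : M * j (fn sup0 (marg j M)) = M := by
  have h := (marg_posSemidef j hM).isHermitian
  rw [map_fn j h]
  refine mul_sup0_of_ker0 (map_isHermitian j h) ?_
  rw [← map_fn j h, mul_ker0_marg j hM]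

theorem sup0_marg_mul (hM : M.PosSemidef) : j (fn sup0 (marg j M)) * M = M := by
  have := congrArg conjTranspose (mul_sup0_marg j hM)
  rwa [conjTranspose_mul, hM.isHermitian.eq, ← map_conjTranspose,
    (fn_isHermitian (marg_posSemidef j hM).isHermitian _).eq] at this

end Support

end Adjoint

section Markov

variable {n n₀ n₁ n₂ : Type*} [Fintype n] [DecidableEq n] [Fintype n₀] [DecidableEq n₀]
  [Fintype n₁] [DecidableEq n₁] [Fintype n₂] [DecidableEq n₂]

/-- Structure of a state saturating strong subadditivity, in the form of exact recovery
identities.  The hypothesis `hc` expresses that `ι₁` and `ι₂` form a commuting square over `j₁`. -/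
theorem markov (ι₁ : Matrix n₁ n₁ ℂ →⋆ₐ[ℂ] Matrix n n ℂ) (ι₂ : Matrix n₂ n₂ ℂ →⋆ₐ[ℂ] Matrix n n ℂ)
    (j₁ : Matrix n₀ n₀ ℂ →⋆ₐ[ℂ] Matrix n₁ n₁ ℂ) {ρ : Matrix n n ℂ} (hρ : ρ.PosSemidef)
    (hc : marg ι₁ (ι₂ (marg ι₂ ρ)) = j₁ (marg j₁ (marg ι₁ ρ)))
    (hS : ent ρ + ent (marg j₁ (marg ι₁ ρ)) = ent (marg ι₁ ρ) + ent (marg ι₂ ρ)) :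
    ι₁ (marg ι₁ ρ * j₁ (pinv (marg j₁ (marg ι₁ ρ)))) * ι₂ (marg ι₂ ρ) = ρ ∧
    ρ * ι₁ (marg ι₁ ρ * j₁ (pinv (marg j₁ (marg ι₁ ρ)))) = ρ * (ρ * ι₂ (pinv (marg ι₂ ρ))) ∧
    ι₁ (fn sup0 (marg ι₁ ρ)) * ι₂ (marg ι₂ ρ) = fn sup0 ρ * ι₂ (marg ι₂ ρ) := by
  have p1 := marg_posSemidef ι₁ hρ
  have p2 := marg_posSemidef ι₂ hρ
  have p0 := marg_posSemidef j₁ p1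
  set ρ₁ := marg ι₁ ρ with hρ₁
  set ρ₂ := marg ι₂ ρ with hρ₂
  set ρ₀ := marg j₁ ρ₁ with hρ₀
  have l2 : trace (ρ * fn Real.log (ι₂ ρ₂)) = trace (ρ₂ * fn Real.log ρ₂) := by
    rw [← map_fn ι₂ p2.isHermitian, trace_mul_comm, trace_mul_marg, trace_mul_comm]
  have l0 : trace (ρ₁ * fn Real.log (j₁ ρ₀)) = trace (ρ₀ * fn Real.log ρ₀) := by
    rw [← map_fn j₁ p0.isHermitian, trace_mul_comm, trace_mul_marg, trace_mul_comm]
  have := recovery ι₁ hρ (map_posSemidef ι₂ p2) p1 (map_posSemidef j₁ p0)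
    (by rw [← map_fn ι₂ p2.isHermitian]; exact mul_ker0_marg ι₂ hρ)
    (by rw [← map_fn j₁ p0.isHermitian]; exact mul_ker0_marg j₁ p1)
    (trace_mul_marg ι₁ ρ) (fun Z => by rw [trace_mul_marg, hc])
    (by
      rw [l2, l0]
      simp only [ent] at hS ⊢
      linarith)
  obtain ⟨h1, h2, h3⟩ := this
  rw [← map_pinv ι₂ p2.isHermitian, ← map_pinv j₁ p0.isHermitian] at h1 h2
  refine ⟨?_, h2.symm, h3.symm⟩
  rw [← h1, mul_assoc, ← map_mul, pinv_mul p2.isHermitian, mul_sup0_marg ι₂ hρ]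

end Markov

section Embedding

variable {n m k : Type*} [Fintype n] [DecidableEq n] [Fintype m] [DecidableEq m]
  [Fintype k] [DecidableEq k]

/-- The inclusion `Z ↦ Z ⊗ 1` of the observables of a subsystem `m`, where `e` splits the index
type `n` into `m` and a complementary factor `k`. -/
noncomputable def emb (e : n ≃ m × k) : Matrix m m ℂ →⋆ₐ[ℂ] Matrix n n ℂ where
  toFun Z := (Z ⊗ₖ (1 : Matrix k k ℂ)).submatrix e e
  map_one' := by simp
  map_mul' X Y := by
    rw [submatrix_mul_equiv, ← mul_kronecker_mul, one_mul]
  map_zero' := by simp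
  map_add' X Y := by rw [add_kronecker]; rfl
  commutes' c := by
    rw [Algebra.algebraMap_eq_smul_one, Algebra.algebraMap_eq_smul_one, smul_kronecker]
    change c • ((1 : Matrix m m ℂ) ⊗ₖ (1 : Matrix k k ℂ)).submatrix e e = _
    simp
  map_star' X := by
    rw [star_eq_conjTranspose, star_eq_conjTranspose, conjTranspose_submatrix,
      conjTranspose_kronecker, conjTranspose_one]

theorem emb_apply (e : n ≃ m × k) (Z : Matrix m m ℂ) (x y : n) :
    emb e Z x y = if (e x).2 = (e y).2 then Z (e x).1 (e y).1 else 0 := by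
  change Z _ _ * (1 : Matrix k k ℂ) _ _ = _
  rw [one_apply]; simp

theorem emb_apply' (e : n ≃ m × k) (Z : Matrix m m ℂ) (x y : n) :
    emb e Z x y = Z (e x).1 (e y).1 * (1 : Matrix k k ℂ) (e x).2 (e y).2 := rfl

theorem marg_emb_apply (e : n ≃ m × k) (M : Matrix n n ℂ) (x y : m) :
    marg (emb e) M x y = ∑ c, M (e.symm (x, c)) (e.symm (y, c)) := by
  have : marg (emb e) M = of fun x y => ∑ c, M (e.symm (x, c)) (e.symm (y, c)) := by
    refine marg_unique _ fun Z => ?_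
    simp only [trace, diag_apply, mul_apply, emb_apply, of_apply]
    rw [← e.symm.sum_comp, Fintype.sum_prod_type]
    refine Finset.sum_congr rfl fun x _ => ?_
    simp_rw [← e.symm.sum_comp (fun j => _ * M j _), Fintype.sum_prod_type]
    simp only [Equiv.apply_symm_apply, ite_mul, zero_mul, Finset.sum_ite_eq, Finset.mem_univ,
      if_true, Finset.mul_sum]
    exact Finset.sum_comm
  rw [this, of_apply]

/-- The inclusion of the complementary factor. -/
noncomputable abbrev emb' (e : n ≃ m × k) : Matrix k k ℂ →⋆ₐ[ℂ] Matrix n n ℂ :=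
  emb (e.trans (Equiv.prodComm m k))

theorem emb_commute (e : n ≃ m × k) (Z : Matrix m m ℂ) (W : Matrix k k ℂ) :
    Commute (emb e Z) (emb' e W) := by
  have h : emb' e W = ((1 : Matrix m m ℂ) ⊗ₖ W).submatrix e e := by
    ext x y
    simp only [emb_apply, one_apply, submatrix_apply, kroneckerMap_apply, ite_mul, one_mul,
      zero_mul]
    congr
  have h' : emb e Z = (Z ⊗ₖ (1 : Matrix k k ℂ)).submatrix e e := rfl
  rw [Commute, SemiconjBy, h, h', submatrix_mul_equiv, submatrix_mul_equiv, ← mul_kronecker_mul,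
    ← mul_kronecker_mul]
  simp

end Embedding

/-! ### Double Markov chains -/

theorem pinv_mul_sup0 {n : Type*} [Fintype n] [DecidableEq n] {M : Matrix n n ℂ}
    (hM : M.IsHermitian) : pinv M * fn sup0 M = pinv M := by
  rw [pinv, fn_mul hM]
  exact fn_congr hM fun i => by by_cases h : hM.eigenvalues i = 0 <;> simp [sup0, h]

section Slices

variable {X C : Type*} [Fintype X] [DecidableEq X] [Fintype C] [DecidableEq C]

/-- The block `(⟨k| ⊗ 1) M (|l⟩ ⊗ 1)` of a matrix on `X × C`. -/
def sl (M : Matrix (X × C) (X × C) ℂ) (k l : C) : Matrix X X ℂ := of fun x y => M (x, k) (y, l)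

/-- The inclusion of the observables of the first factor of `X × C`. -/
noncomputable abbrev inc (X C : Type*) [Fintype X] [DecidableEq X] [Fintype C] [DecidableEq C] :
    Matrix X X ℂ →⋆ₐ[ℂ] Matrix (X × C) (X × C) ℂ := emb (Equiv.refl (X × C))

/-- The inclusion of the observables of the second factor of `X × C`. -/
noncomputable abbrev inc' (X C : Type*) [Fintype X] [DecidableEq X] [Fintype C] [DecidableEq C] :
    Matrix C C ℂ →⋆ₐ[ℂ] Matrix (X × C) (X × C) ℂ := emb (Equiv.prodComm X C)

theorem inc_commute (Z : Matrix X X ℂ) (W : Matrix C C ℂ) :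
    Commute (inc X C Z) (inc' X C W) := emb_commute (Equiv.refl (X × C)) Z W

theorem sl_ext {M N : Matrix (X × C) (X × C) ℂ} (h : ∀ k l, sl M k l = sl N k l) : M = N := by
  ext ⟨x, k⟩ ⟨y, l⟩
  exact congrFun (congrFun (h k l) x) y

theorem sl_mul (M N : Matrix (X × C) (X × C) ℂ) (k l : C) :
    sl (M * N) k l = ∑ j, sl M k j * sl N j l := by
  ext x y
  simp only [sl, of_apply, mul_apply, Fintype.sum_prod_type, Matrix.sum_apply]
  exact Finset.sum_comm

theorem sl_conjTranspose (M : Matrix (X × C) (X × C) ℂ) (k l : C) : sl Mᴴ k l = (sl M l k)ᴴ := rfl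

theorem sl_sub (M N : Matrix (X × C) (X × C) ℂ) (k l : C) :
    sl (M - N) k l = sl M k l - sl N k l := rfl

theorem sl_inc (Z : Matrix X X ℂ) (k l : C) : sl (inc X C Z) k l = if k = l then Z else 0 := by
  ext x y
  change Z x y * (1 : Matrix C C ℂ) k l = _
  rw [one_apply]
  split_ifs <;> simp

theorem sl_mul_inc (M : Matrix (X × C) (X × C) ℂ) (Z : Matrix X X ℂ) (k l : C) :
    sl (M * inc X C Z) k l = sl M k l * Z := by
  rw [sl_mul]
  simp [sl_inc]

theorem sl_inc_mul (M : Matrix (X × C) (X × C) ℂ) (Z : Matrix X X ℂ) (k l : C) :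
    sl (inc X C Z * M) k l = Z * sl M k l := by
  rw [sl_mul]
  simp [sl_inc]

theorem trace_eq_sum_sl (M : Matrix (X × C) (X × C) ℂ) : trace M = ∑ k, trace (sl M k k) := by
  simp only [trace, diag_apply, Fintype.sum_prod_type, sl, of_apply]
  exact Finset.sum_comm

end Slices

section DoubleMarkov

variable {N A E K : Type*} [Fintype N] [DecidableEq N] [Fintype A] [DecidableEq A]
  [Fintype E] [DecidableEq E]

/-- A family of operators on `A` which acts on a state `r` like a family on a commuting system `E`,
and which is formally self-adjoint for `r`, is self-adjoint, commutes with `r`, and is abelian. -/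
theorem double_family (L : Matrix A A ℂ →⋆ₐ[ℂ] Matrix N N ℂ) (R : Matrix E E ℂ →⋆ₐ[ℂ] Matrix N N ℂ)
    (hLR : ∀ Z W, Commute (L Z) (R W)) {r : Matrix N N ℂ} (hr : r.PosSemidef)
    (x : K → K → Matrix A A ℂ) (y : K → K → Matrix E E ℂ)
    (H1 : ∀ k l, L (x k l) * r = R (y k l) * r)
    (H2 : ∀ k l, L (x k l)ᴴ * r = R (y k l)ᴴ * r)
    (H3 : ∀ k l, L (x k l) * r = r * L (x l k)ᴴ)
    (s1 : ∀ k l, x k l * fn sup0 (marg L r) = x k l)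
    (s2 : ∀ k l, fn sup0 (marg L r) * x k l = x k l) :
    (∀ k l, (x k l)ᴴ = x l k) ∧ (∀ k l, Commute (L (x k l)) r) ∧
      (∀ k l i j, Commute (x k l) (x i j)) := by
  have hA := (marg_posSemidef L hr).isHermitian
  have H2' : ∀ k l, r * L (x k l) = r * R (y k l) := by
    intro k l
    have := congrArg conjTranspose (H2 k l)
    simpa [map_conjTranspose, hr.isHermitian.eq] using this
  have H1' : ∀ k l, r * L (x k l)ᴴ = r * R (y k l)ᴴ := by
    intro k l
    have := congrArg conjTranspose (H1 k l)
    simpa [map_conjTranspose, hr.isHermitian.eq] using this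
  have c1 : ∀ k l, trace (r * L (x k l) * L (x k l)ᴴ) = trace (r * L (x l k)ᴴ * L (x k l)ᴴ) := by
    intro k l
    calc trace (r * L (x k l) * L (x k l)ᴴ) = trace (r * (R (y k l) * L (x k l)ᴴ)) := by
          rw [H2', mul_assoc]
      _ = trace (L (x k l)ᴴ * (R (y k l) * r)) := by
          rw [← (hLR _ _).eq, trace_mul_comm, mul_assoc]
      _ = trace (r * L (x l k)ᴴ * L (x k l)ᴴ) := by
          rw [← H1, ← H3, trace_mul_comm]
  have c2 : ∀ k l, trace (r * L (x k l) * L (x l k)) = trace (r * L (x l k)ᴴ * L (x l k)) := by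
    intro k l
    calc trace (r * L (x k l) * L (x l k)) = trace (r * (R (y k l) * L (x l k))) := by
          rw [H2', mul_assoc]
      _ = trace (L (x l k) * (R (y k l) * r)) := by
          rw [← (hLR _ _).eq, trace_mul_comm, mul_assoc]
      _ = trace (r * L (x l k)ᴴ * L (x l k)) := by
          rw [← H1, ← H3, trace_mul_comm]
  have z : ∀ k l, r * L (x k l) = r * L (x l k)ᴴ := by
    intro k l
    have : r * (L (x k l) - L (x l k)ᴴ) = 0 := by
      refine mul_eq_zero_of_trace hr ?_
      rw [trace_mul_cycle, trace_mul_comm, conjTranspose_sub, ← map_conjTranspose,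
        ← map_conjTranspose, conjTranspose_conjTranspose]
      have : r * ((L (x k l) - L (x l k)ᴴ) * (L (x k l)ᴴ - L (x l k))) =
        r * L (x k l) * L (x k l)ᴴ - r * L (x l k)ᴴ * L (x k l)ᴴ -
          (r * L (x k l) * L (x l k) - r * L (x l k)ᴴ * L (x l k)) := by noncomm_ring
      rw [this, trace_sub, trace_sub, trace_sub, c1, c2]
      simp
    rw [mul_sub, sub_eq_zero] at this
    exact this
  have hcomm : ∀ k l, Commute (L (x k l)) r := fun k l => (H3 k l).trans (z k l).symm
  have herm : ∀ k l, (x k l)ᴴ = x l k := by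
    intro k l
    have e1 : marg L r * x l k = marg L r * (x k l)ᴴ := by
      rw [← marg_mul_right, ← marg_mul_right, z]
    have e2 := congrArg (pinv (marg L r) * ·) e1
    simp only [← mul_assoc, pinv_mul hA, s2] at e2
    have e3 := congrArg conjTranspose (s1 k l)
    rw [conjTranspose_mul, (fn_isHermitian hA _).eq] at e3
    rw [e2, e3]
  refine ⟨herm, hcomm, fun k l i j => ?_⟩
  have e : L (x k l) * L (x i j) * r = L (x i j) * L (x k l) * r := by
    calc L (x k l) * L (x i j) * r = L (x k l) * R (y i j) * r := by
          rw [mul_assoc, H1, mul_assoc]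
      _ = R (y i j) * (L (x k l) * r) := by rw [(hLR _ _).eq, mul_assoc]
      _ = L (x i j) * r * L (x k l) := by rw [(hcomm k l).eq, ← mul_assoc, H1]
      _ = L (x i j) * L (x k l) * r := by rw [mul_assoc, ← (hcomm k l).eq, mul_assoc]
  have e1 : x k l * x i j * marg L r = x i j * x k l * marg L r := by
    rw [← marg_mul_left, ← marg_mul_left, map_mul, map_mul, e]
  have e2 := congrArg (· * pinv (marg L r)) e1
  simp only [mul_assoc, mul_pinv hA, s1] at e2
  exact e2

variable {C : Type*} [Fintype C] [DecidableEq C]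

/-- Regrouping `AEC` as `(AC)E`. -/
def eAC (A E C : Type*) : (A × E) × C ≃ (A × C) × E where
  toFun x := ((x.1.1, x.2), x.1.2)
  invFun x := ((x.1.1, x.2), x.1.2)
  left_inv _ := rfl
  right_inv _ := rfl

/-- Regrouping `AEC` as `(EC)A`. -/
def eEC (A E C : Type*) : (A × E) × C ≃ (E × C) × A where
  toFun x := ((x.1.2, x.2), x.1.1)
  invFun x := ((x.2, x.1.1), x.1.2)
  left_inv _ := rfl
  right_inv _ := rfl

theorem sl_eAC (a : Matrix (A × C) (A × C) ℂ) (k l : C) :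
    sl (emb (eAC A E C) a) k l = inc A E (sl a k l) := rfl

theorem sl_eEC (b : Matrix (E × C) (E × C) ℂ) (k l : C) :
    sl (emb (eEC A E C) b) k l = inc' A E (sl b k l) := rfl

theorem cross_AC (r : Matrix (A × E) (A × E) ℂ) :
    marg (emb (eAC A E C)) (inc (A × E) C r) = inc A C (marg (inc A E) r) := by
  ext ⟨x, k⟩ ⟨y, l⟩
  rw [marg_emb_apply, emb_apply', marg_emb_apply, Finset.sum_mul]
  rfl

theorem cross_EC (r : Matrix (A × E) (A × E) ℂ) :
    marg (emb (eEC A E C)) (inc (A × E) C r) = inc E C (marg (inc' A E) r) := by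
  ext ⟨x, k⟩ ⟨y, l⟩
  rw [marg_emb_apply, emb_apply', marg_emb_apply, Finset.sum_mul]
  rfl

theorem marg_AC (ρ : Matrix ((A × E) × C) ((A × E) × C) ℂ) :
    marg (inc A E) (marg (inc (A × E) C) ρ) = marg (inc A C) (marg (emb (eAC A E C)) ρ) := by
  ext x y
  simp only [marg_emb_apply, eAC, Equiv.refl_symm, Equiv.refl_apply, Equiv.coe_fn_symm_mk]
  exact Finset.sum_comm

theorem marg_EC (ρ : Matrix ((A × E) × C) ((A × E) × C) ℂ) :
    marg (inc' A E) (marg (inc (A × E) C) ρ) = marg (inc E C) (marg (emb (eEC A E C)) ρ) := by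
  ext x y
  simp only [marg_emb_apply, eEC, Equiv.refl_symm, Equiv.refl_apply, Equiv.coe_fn_symm_mk,
    Equiv.prodComm_symm, Equiv.prodComm_apply, Prod.swap]
  exact Finset.sum_comm

/-- If both `C - A - E` and `C - E - A` are quantum Markov chains, then `ρ_{AEC} = a ρ_{AE}` with a
positive `a` on `AC` commuting with `ρ_{AE}`, whose blocks are mutually commuting operators on `A`
that act on `ρ_{AE}` like operators on `E`. -/
theorem double_markov {ρ : Matrix ((A × E) × C) ((A × E) × C) ℂ} (hρ : ρ.PosSemidef)
    {r : Matrix (A × E) (A × E) ℂ} {ρA : Matrix A A ℂ} {ρE : Matrix E E ℂ}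
    {ρAC : Matrix (A × C) (A × C) ℂ} {ρEC : Matrix (E × C) (E × C) ℂ}
    (hr : marg (inc (A × E) C) ρ = r) (hAC : marg (emb (eAC A E C)) ρ = ρAC)
    (hEC : marg (emb (eEC A E C)) ρ = ρEC) (hA : marg (inc A E) r = ρA)
    (hE : marg (inc' A E) r = ρE)
    (h1 : ent ρ + ent ρA = ent ρAC + ent r) (h2 : ent ρ + ent ρE = ent ρEC + ent r) :
    ∃ (a : Matrix (A × C) (A × C) ℂ) (b : Matrix (E × C) (E × C) ℂ),
      a.PosSemidef ∧ Commute a (inc A C ρA) ∧ a * inc A C ρA = ρAC ∧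
      emb (eAC A E C) a * inc (A × E) C r = ρ ∧
      Commute (emb (eAC A E C) a) (inc (A × E) C r) ∧
      (∀ k l i j, Commute (sl a k l) (sl a i j)) ∧
      (∀ k l, inc A E (sl a k l) * r = inc' A E (sl b k l) * r) ∧
      (∀ k l, r * inc A E (sl a k l) = r * inc' A E (sl b k l)) := by
  have pr : r.PosSemidef := hr ▸ marg_posSemidef _ hρ
  have pAC : ρAC.PosSemidef := hAC ▸ marg_posSemidef _ hρ
  have pEC : ρEC.PosSemidef := hEC ▸ marg_posSemidef _ hρ
  have pA : ρA.PosSemidef := hA ▸ marg_posSemidef _ pr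
  have pE : ρE.PosSemidef := hE ▸ marg_posSemidef _ pr
  have hA' : marg (inc A C) ρAC = ρA := by rw [← hA, ← hr, marg_AC, hAC]
  have hE' : marg (inc E C) ρEC = ρE := by rw [← hE, ← hr, marg_EC, hEC]
  obtain ⟨m1, m2, m3⟩ := markov (emb (eAC A E C)) (inc (A × E) C) (inc A C) hρ
    (by rw [hr, hAC, hA', cross_AC, hA]) (by rw [hr, hAC, hA', h1])
  obtain ⟨n1, n2, n3⟩ := markov (emb (eEC A E C)) (inc (A × E) C) (inc E C) hρ
    (by rw [hr, hEC, hE', cross_EC, hE]) (by rw [hr, hEC, hE', h2])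
  rw [hr, hAC, hA'] at m1 m2
  rw [hr, hAC] at m3
  rw [hr, hEC, hE'] at n1 n2
  rw [hr, hEC] at n3
  set a := ρAC * inc A C (pinv ρA) with ha
  set b := ρEC * inc E C (pinv ρE) with hb
  set σ := inc (A × E) C r with hσ
  set α := emb (eAC A E C) a with hα
  set β := emb (eEC A E C) b with hβ
  have hσH : σᴴ = σ := (map_isHermitian _ pr.isHermitian).eq
  have aρ : αᴴ * ρ = βᴴ * ρ := by
    have := congrArg conjTranspose (m2.trans n2.symm)
    simpa [hρ.isHermitian.eq] using this
  have aσ : αᴴ * σ = βᴴ * σ := by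
    have e1 : αᴴ = αᴴ * emb (eAC A E C) (fn sup0 ρAC) := by
      rw [hα, ← map_conjTranspose, ← map_mul, ha, conjTranspose_mul, pAC.isHermitian.eq, mul_assoc,
        mul_sup0 pAC.isHermitian]
    have e2 : βᴴ = βᴴ * emb (eEC A E C) (fn sup0 ρEC) := by
      rw [hβ, ← map_conjTranspose, ← map_mul, hb, conjTranspose_mul, pEC.isHermitian.eq, mul_assoc,
        mul_sup0 pEC.isHermitian]
    rw [e1, e2, mul_assoc, mul_assoc, m3, n3, ← mul_pinv hρ.isHermitian, ← mul_assoc, ← mul_assoc,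
      ← mul_assoc, ← mul_assoc, aρ]
  have self : α * σ = σ * αᴴ := by
    have := congrArg conjTranspose m1
    rw [conjTranspose_mul, hσH, hρ.isHermitian.eq] at this
    rw [m1, this]
  obtain ⟨f1, f2, f3⟩ := double_family (inc A E) (inc' A E) inc_commute pr (sl a) (sl b)
    (fun k l => by
      have := congrArg (fun M => sl M k l) (m1.trans n1.symm)
      simpa only [hα, hβ, hσ, sl_mul_inc, sl_eAC, sl_eEC] using this)
    (fun k l => by
      have := congrArg (fun M => sl M l k) aσ
      simpa only [hα, hβ, hσ, sl_mul_inc, sl_conjTranspose, sl_eAC, sl_eEC, map_conjTranspose]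
        using this)
    (fun k l => by
      have := congrArg (fun M => sl M k l) self
      simpa only [hα, hσ, sl_mul_inc, sl_inc_mul, sl_conjTranspose, sl_eAC, map_conjTranspose]
        using this)
    (fun k l => by
      rw [hA, ← sl_mul_inc, ha, mul_assoc, ← map_mul]
      rw [pinv_mul_sup0 pA.isHermitian])
    (fun k l => by
      rw [hA, ← sl_inc_mul, ha, ← mul_assoc]
      have := sup0_marg_mul (inc A C) pAC
      rw [hA'] at this
      rw [this])
  have ca : Commute α σ := by
    refine sl_ext fun k l => ?_
    rw [hα, hσ, sl_mul_inc, sl_inc_mul, sl_eAC]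
    exact f2 k l
  have caA : Commute a (inc A C ρA) := by
    refine sl_ext fun k l => ?_
    rw [sl_mul_inc, sl_inc_mul, ← hA, ← marg_mul_left, ← marg_mul_right, (f2 k l).eq]
  have aA : a * inc A C ρA = ρAC := by
    rw [ha, mul_assoc, ← map_mul, pinv_mul pA.isHermitian, ← hA', mul_sup0_marg _ pAC]
  have paa : a.PosSemidef := by
    refine mul_posSemidef pAC (map_posSemidef _ (pinv_posSemidef pA)) ?_
    have : Commute (inc A C ρA) ρAC := by
      rw [← aA]; exact (caA.symm).mul_right (Commute.refl _)
    rw [map_pinv _ pA.isHermitian]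
    exact (commute_fn (map_isHermitian _ pA.isHermitian) this _).symm
  refine ⟨a, b, paa, caA, aA, m1, ca, f3, fun k l => ?_, fun k l => ?_⟩
  · have := congrArg (fun M => sl M k l) (m1.trans n1.symm)
    simpa only [hα, hβ, hσ, sl_mul_inc, sl_eAC, sl_eEC] using this
  · have := congrArg (fun M => (sl M l k)ᴴ) aσ
    simpa only [hα, hβ, hσ, sl_mul_inc, sl_conjTranspose, sl_eAC, sl_eEC, conjTranspose_mul,
      conjTranspose_conjTranspose, pr.isHermitian.eq] using this

end DoubleMarkov

/-! ### Logarithms of commuting products and Klein's inequality -/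

section CommutingLog

variable {n : Type*} [Fintype n] [DecidableEq n]

theorem sol_poly {P Q U V : Matrix n n ℂ} {p q : n → ℝ} (hP : IsDiag P U p) (hQ : IsDiag Q V q)
    (h : Commute P Q) (F : ℝ[X]) :
    aeval (P * Q) (F.map (algebraMap ℝ ℂ)) = sol U V p q (fun x y => F.eval (x * y)) := by
  induction F using Polynomial.induction_on' with
  | add F G hF hG =>
    simp only [Polynomial.map_add, map_add, hF, hG, eval_add, ← sol_add]
  | monomial k c =>
    have pw : ∀ {M W : Matrix n n ℂ} {t : n → ℝ}, IsDiag M W t → M ^ k = fn (fun x => x ^ k) M := by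
      intro M W t hM
      have h1 := hM.aeval (X ^ k)
      rw [hM.fn_eq]
      simpa using h1
    rw [Polynomial.map_monomial, aeval_monomial, h.mul_pow, pw hP, pw hQ, fn_mul_fn_eq_sol hP hQ,
      ← Algebra.smul_def]
    have : (algebraMap ℝ ℂ c) • sol U V p q (fun x y => x ^ k * y ^ k) =
        sol U V p q (fun x y => c * (x ^ k * y ^ k)) := (sol_smul c _).symm
    rw [this]
    simp only [eval_monomial, mul_pow]

/-- Functional calculus for the product of two commuting Hermitian matrices. -/
theorem fn_mul_commute {P Q U V : Matrix n n ℂ} {p q : n → ℝ} (hP : IsDiag P U p)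
    (hQ : IsDiag Q V q) (h : Commute P Q) (f : ℝ → ℝ) :
    fn f (P * Q) = sol U V p q (fun x y => f (x * y)) := by
  have hH : (P * Q).IsHermitian := by
    rw [IsHermitian, conjTranspose_mul, hP.isHermitian.eq, hQ.isHermitian.eq, h.eq]
  set s : Finset ℝ := Finset.univ.image hH.eigenvalues ∪
    Finset.univ.image (fun x : n × n => p x.1 * q x.2) with hs
  have hF : ∀ x ∈ s, (Lagrange.interpolate s id f).eval x = f x := fun x hx =>
    Lagrange.eval_interpolate_at_node (v := id) f Function.injective_id.injOn hx
  set F := Lagrange.interpolate s id f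
  rw [fn_eq_aeval hH f (F := F.map (algebraMap ℝ ℂ)), sol_poly hP hQ h]
  · refine sol_congr fun i j _ => hF _ ?_
    rw [hs]
    exact Finset.mem_union_right _ (Finset.mem_image.mpr ⟨(i, j), Finset.mem_univ _, rfl⟩)
  · intro i
    have h1 := hF (hH.eigenvalues i) (by
      rw [hs]
      exact Finset.mem_union_left _ (Finset.mem_image.mpr ⟨i, Finset.mem_univ _, rfl⟩))
    rw [← h1]
    rw [← Complex.coe_algebraMap, eval_map_algebraMap, aeval_algebraMap_apply]
    simp

theorem sol_neg {U V : Matrix n n ℂ} {p q : n → ℝ} (f : ℝ → ℝ → ℝ) :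
    sol U V p q (fun x y => -f x y) = -sol U V p q f := by
  have := sol_smul (U := U) (V := V) (p := p) (q := q) (-1) f
  simpa using this

/-- On the common support, the logarithm of a commuting product is the sum of logarithms. -/
theorem mul_log_mul {M P Q : Matrix n n ℂ} (hP : P.IsHermitian) (hQ : Q.IsHermitian)
    (h : Commute P Q) (h1 : M * fn ker0 P = 0) (h2 : M * fn ker0 Q = 0) :
    M * fn Real.log (P * Q) = M * fn Real.log P + M * fn Real.log Q := by
  have d1 := exists_isDiag hP
  have d2 := exists_isDiag hQ
  have hlog : ∀ x y : ℝ, Real.log (x * y) =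
      Real.log x + Real.log y + (-(ker0 x * Real.log y) + -(Real.log x * ker0 y)) := by
    intro x y
    by_cases hx : x = 0
    · simp [hx, ker0]
    by_cases hy : y = 0
    · simp [hy, ker0]
    · simp [ker0, hx, hy, Real.log_mul hx hy]
  have e : fn Real.log (P * Q) = fn Real.log P + fn Real.log Q +
      (-(fn ker0 P * fn Real.log Q) + -(fn ker0 Q * fn Real.log P)) := by
    have hcm : fn ker0 Q * fn Real.log P = fn Real.log P * fn ker0 Q :=
      (commute_fn hQ (commute_fn hP h Real.log).symm ker0).eq
    rw [hcm, fn_mul_commute d1 d2 h]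
    simp only [hlog]
    rw [sol_add, sol_add, sol_add, sol_fst d1 d2, sol_snd d1 d2, sol_neg, sol_neg,
      fn_mul_fn_eq_sol d1 d2, fn_mul_fn_eq_sol d1 d2]
  rw [e]
  simp only [mul_add, mul_neg, ← mul_assoc, h1, h2, zero_mul, neg_zero, add_zero]

theorem mul_ker0_mul {M P Q : Matrix n n ℂ} (hP : P.IsHermitian) (hQ : Q.IsHermitian)
    (h : Commute P Q) (h1 : M * fn ker0 P = 0) (h2 : M * fn ker0 Q = 0) :
    M * fn ker0 (P * Q) = 0 := by
  have d1 := exists_isDiag hP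
  have d2 := exists_isDiag hQ
  have hker : ∀ x y : ℝ, ker0 (x * y) = ker0 x + ker0 y + -(ker0 x * ker0 y) := by
    intro x y
    by_cases hx : x = 0
    · simp [hx, ker0]
    by_cases hy : y = 0
    · simp [hy, ker0]
    · simp [ker0, hx, hy]
  have e : fn ker0 (P * Q) = fn ker0 P + fn ker0 Q + -(fn ker0 P * fn ker0 Q) := by
    rw [fn_mul_commute d1 d2 h]
    simp only [hker]
    rw [sol_add, sol_add, sol_fst d1 d2, sol_snd d1 d2, sol_neg, fn_mul_fn_eq_sol d1 d2]
  rw [e]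
  simp only [mul_add, mul_neg, ← mul_assoc, h1, h2, zero_mul, neg_zero, add_zero]

/-- Klein's inequality. -/
theorem klein {ρ σ : Matrix n n ℂ} (hρ : ρ.PosSemidef) (hσ : σ.PosSemidef)
    (hs : ρ * fn ker0 σ = 0) :
    ent ρ + (trace (ρ * fn Real.log σ)).re ≤ (trace σ).re - (trace ρ).re := by
  obtain ⟨U, V, p, q, h⟩ := exists_pairDiag hρ hσ hs
  have e1 : ent ρ = -∑ i, ∑ j, wt U V i j * (p i * Real.log (p i)) := by
    rw [h.dρ.ent_eq]
    congr 1
    refine Finset.sum_congr rfl fun i _ => ?_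
    rw [← Finset.sum_mul, sum_wt_left h.dρ.left h.dσ.left, one_mul]
  have e2 : ρ * fn Real.log σ = sol U V p q (fun x y => x * Real.log y) := by
    rw [← fn_mul_fn_eq_sol h.dρ h.dσ (fun x => x), fn_id h.dρ.isHermitian]
  have e3 : trace ρ = trace (sol U V p q fun x _ => x) := by
    rw [sol_fst h.dρ h.dσ, fn_id h.dρ.isHermitian]
  have e4 : trace σ = trace (sol U V p q fun _ y => y) := by
    rw [sol_snd h.dρ h.dσ, fn_id h.dσ.isHermitian]
  rw [e1, e2, e3, e4, trace_sol, trace_sol, trace_sol, Complex.ofReal_re, Complex.ofReal_re,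
    Complex.ofReal_re, neg_add_eq_sub, ← Finset.sum_sub_distrib, ← Finset.sum_sub_distrib]
  refine Finset.sum_le_sum fun i _ => ?_
  rw [← Finset.sum_sub_distrib, ← Finset.sum_sub_distrib]
  refine Finset.sum_le_sum fun j _ => ?_
  by_cases hij : (Uᴴ * V) i j = 0
  · simp [wt, hij]
  suffices hle : p i * Real.log (q j) - p i * Real.log (p i) ≤ q j - p i by
    have hw := mul_le_mul_of_nonneg_left hle (wt_nonneg (U := U) (V := V) i j)
    rwa [mul_sub, mul_sub] at hw
  have hq := h.hq j
  have hs := h.supp i j hij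
  rcases (h.hp i).eq_or_lt with hp | hp
  · rw [← hp]; simpa using hq
  · have hq' : 0 < q j := lt_of_le_of_ne hq fun h0 => hp.ne' (hs h0.symm)
    have h1 := Real.log_le_sub_one_of_pos (div_pos hq' hp)
    rw [Real.log_div hq'.ne' hp.ne'] at h1
    have h2 := mul_le_mul_of_nonneg_left h1 hp.le
    have h3 : p i * (q j / p i - 1) = q j - p i := by field_simp
    linarith

end CommutingLog

/-! ### Transfer to `D` and the core inequality -/

section Transfer

variable {A D E : Type*} [Fintype A] [DecidableEq A] [Fintype D] [DecidableEq D]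
  [Fintype E] [DecidableEq E]

theorem cross_EC' (Y : Matrix (D × E) (D × E) ℂ) :
    marg (inc (A × D) E) (emb (eEC A D E) Y) = inc' A D (marg (inc D E) Y) := by
  ext ⟨x, k⟩ ⟨y, l⟩
  rw [marg_emb_apply, emb_apply', marg_emb_apply, Finset.sum_mul]
  rfl

theorem emb_inc (α : Matrix A A ℂ) :
    emb (eAC A D E) (inc A E α) = inc (A × D) E (inc A D α) := by
  ext ⟨⟨x, d⟩, e⟩ ⟨⟨x', d'⟩, e'⟩
  change α x x' * (1 : Matrix E E ℂ) e e' * (1 : Matrix D D ℂ) d d' =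
    α x x' * (1 : Matrix D D ℂ) d d' * (1 : Matrix E E ℂ) e e'
  ring

theorem one_prod (x x' : A) (d d' : D) : (1 : Matrix (A × D) (A × D) ℂ) (x, d) (x', d') =
    (1 : Matrix A A ℂ) x x' * (1 : Matrix D D ℂ) d d' := by
  simp only [one_apply, Prod.mk.injEq]
  by_cases h : x = x' <;> by_cases h' : d = d' <;> simp [h, h']

theorem emb_inc' (α : Matrix E E ℂ) :
    emb (eAC A D E) (inc' A E α) = inc' (A × D) E α := by
  ext ⟨⟨x, d⟩, e⟩ ⟨⟨x', d'⟩, e'⟩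
  change α e e' * (1 : Matrix A A ℂ) x x' * (1 : Matrix D D ℂ) d d' =
    α e e' * (1 : Matrix (A × D) (A × D) ℂ) (x, d) (x', d')
  rw [one_prod]
  ring

theorem emb_inc'' (α : Matrix E E ℂ) :
    emb (eEC A D E) (inc' D E α) = inc' (A × D) E α := by
  ext ⟨⟨x, d⟩, e⟩ ⟨⟨x', d'⟩, e'⟩
  change α e e' * (1 : Matrix D D ℂ) d d' * (1 : Matrix A A ℂ) x x' =
    α e e' * (1 : Matrix (A × D) (A × D) ℂ) (x, d) (x', d')
  rw [one_prod]
  ring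

/-- If `A - D - E` is a quantum Markov chain, an operator `α` on `A` acting on `ρ_{AE}` like an
operator on `E` commutes with `ρ_{AD}` and acts on it like an operator on `D`. -/
theorem transfer_markov {τ : Matrix ((A × D) × E) ((A × D) × E) ℂ} (hτ : τ.PosSemidef)
    {r : Matrix (A × E) (A × E) ℂ} {q : Matrix (A × D) (A × D) ℂ} {ρD : Matrix D D ℂ}
    {ρDE : Matrix (D × E) (D × E) ℂ}
    (hr : marg (emb (eAC A D E)) τ = r) (hq : marg (inc (A × D) E) τ = q)
    (hDE : marg (emb (eEC A D E)) τ = ρDE) (hD : marg (inc' A D) q = ρD)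
    (hS : ent τ + ent ρD = ent q + ent ρDE) {α : Matrix A A ℂ} {α' : Matrix E E ℂ}
    (h1 : inc A E α * r = inc' A E α' * r) (h2 : r * inc A E α = r * inc' A E α') :
    Commute (inc A D α) q ∧
      inc A D α * q * inc' A D ρD = q * inc' A D (marg (inc' A D) (inc A D α * q)) := by
  have pq : q.PosSemidef := hq ▸ marg_posSemidef _ hτ
  have hE : marg (inc D E) ρDE = ρD := by rw [← hDE, ← marg_EC, hq, hD]
  obtain ⟨-, -, m3⟩ := markov (inc (A × D) E) (emb (eEC A D E)) (inc' A D) hτ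
    (by rw [hDE, hq, hD, cross_EC', hE]) (by rw [hDE, hq, hD, hS])
  rw [hDE, hq] at m3
  have k1 : inc (A × D) E (inc A D α) * τ = inc' (A × D) E α' * τ := by
    have := mul_eq_zero_of_marg (emb (eAC A D E)) hτ (X := inc A E α - inc' A E α')
      (by rw [hr, sub_mul, h1, sub_self])
    rwa [map_sub, emb_inc, emb_inc', sub_mul, sub_eq_zero] at this
  have k2 : τ * inc (A × D) E (inc A D α) = τ * inc' (A × D) E α' := by
    have := mul_eq_zero_of_marg' (emb (eAC A D E)) hτ (X := inc A E α - inc' A E α')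
      (by rw [hr, mul_sub, h2, sub_self])
    rwa [map_sub, emb_inc, emb_inc', mul_sub, sub_eq_zero] at this
  have hcomm : Commute (inc A D α) q := by
    change inc A D α * q = q * inc A D α
    rw [← hq, ← marg_mul_left, ← marg_mul_right, k1, k2]
    exact marg_mul_comm _ _ fun Z => (inc_commute Z α').symm
  refine ⟨hcomm, ?_⟩
  have hd : marg (inc' A D) (inc A D α * q) = marg (inc D E) (inc' D E α' * ρDE) := by
    rw [← hDE, ← marg_mul_left, ← marg_EC, emb_inc'', ← k1, marg_mul_left, hq]
  have e1 : inc (A × D) E (inc A D α * fn sup0 q) * emb (eEC A D E) ρDE =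
      inc (A × D) E (fn sup0 q) * emb (eEC A D E) (inc' D E α' * ρDE) := by
    rw [map_mul, mul_assoc, m3, ← mul_assoc, ← mul_pinv hτ.isHermitian, ← mul_assoc, k1,
      mul_assoc, mul_assoc, ← mul_assoc τ, mul_pinv hτ.isHermitian, ← m3, ← mul_assoc,
      ← (inc_commute _ _).eq, map_mul, emb_inc'', mul_assoc]
  have e2 := congrArg (marg (inc (A × D) E)) e1
  rw [marg_mul_left, marg_mul_left, cross_EC', cross_EC', hE, ← hd] at e2
  have e3 := congrArg (q * ·) e2
  simp only [← mul_assoc] at e3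
  rwa [mul_sup0 pq.isHermitian, ← hcomm.eq, mul_assoc (inc A D α), mul_sup0 pq.isHermitian] at e3

/-- The operator on `D` representing the action of `α` (on `A`) on the state `q` of `AD`. -/
noncomputable def phi (q : Matrix (A × D) (A × D) ℂ) (α : Matrix A A ℂ) : Matrix D D ℂ :=
  marg (inc' A D) (inc A D α * q) * pinv (marg (inc' A D) q)

/-- The conclusions of `transfer_markov` in terms of `phi`: on `q`, the operator `α` on `A` may be
replaced by `phi q α` on `D`, which commutes with `ρ_D`, and `phi q` preserves adjoints. -/
theorem transfer {q : Matrix (A × D) (A × D) ℂ} (hq : q.PosSemidef) {α : Matrix A A ℂ}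
    (h1 : Commute (inc A D α) q)
    (h2 : inc A D α * q * inc' A D (marg (inc' A D) q) =
      q * inc' A D (marg (inc' A D) (inc A D α * q))) :
    q * inc' A D (phi q α) = inc A D α * q ∧ Commute (phi q α) (marg (inc' A D) q) ∧
      phi q αᴴ = (phi q α)ᴴ := by
  have pD := marg_posSemidef (inc' A D) hq
  set ρD := marg (inc' A D) q with hD
  set d := marg (inc' A D) (inc A D α * q) with hd
  have c : Commute d ρD := by
    have := congrArg (marg (inc' A D)) h2
    rwa [marg_mul_right, marg_mul_right, ← hd, ← hD] at this
  have cp : Commute (pinv ρD) d := commute_fn pD.isHermitian c.symm _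
  refine ⟨?_, ?_, ?_⟩
  · rw [phi, ← hd, ← hD, map_mul, ← mul_assoc, ← h2, mul_assoc _ (inc' A D ρD), ← map_mul,
      mul_pinv pD.isHermitian, mul_assoc, mul_sup0_marg _ hq]
  · rw [phi, ← hd, ← hD]
    exact c.mul_left (commute_fn pD.isHermitian (Commute.refl _) _)
  · have : marg (inc' A D) (inc A D αᴴ * q) = dᴴ := by
      rw [hd, ← marg_conjTranspose, conjTranspose_mul, hq.isHermitian.eq, ← map_conjTranspose]
      congr 1
      have := congrArg conjTranspose h1.eq
      simpa [hq.isHermitian.eq, ← map_conjTranspose] using this.symm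
    rw [phi, phi, this, ← hd, ← hD, ← cp.eq, conjTranspose_mul, (pinv_isHermitian pD.isHermitian).eq]

end Transfer

section Core

variable {A C D E : Type*} [Fintype A] [DecidableEq A] [Fintype C] [DecidableEq C]
  [Fintype D] [DecidableEq D] [Fintype E] [DecidableEq E]

theorem sl_pow_commute {a : Matrix (A × C) (A × C) ℂ}
    (h : ∀ k l i j, Commute (sl a k l) (sl a i j)) (n : ℕ) (k l i j : C) :
    Commute (sl a k l) (sl (a ^ n) i j) := by
  induction n generalizing i j with
  | zero =>
    have : sl (a ^ 0) i j = if i = j then (1 : Matrix A A ℂ) else 0 := by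
      rw [pow_zero, ← map_one (inc A C), sl_inc]
    rw [this]
    split_ifs
    · exact Commute.one_right _
    · exact Commute.zero_right _
  | succ n ih =>
    rw [pow_succ, sl_mul]
    exact Commute.sum_right _ _ _ fun t _ => (ih _ _).mul_right (h _ _ _ _)

/-- If the blocks of `a` are mutually commuting and act on `q` like those of `b`, then the same is
true of all polynomials in `a` and `b`. -/
theorem moments {q : Matrix (A × D) (A × D) ℂ} {a : Matrix (A × C) (A × C) ℂ}
    {b : Matrix (D × C) (D × C) ℂ} (hc : ∀ k l i j, Commute (sl a k l) (sl a i j))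
    (h : ∀ k l, inc A D (sl a k l) * q = inc' A D (sl b k l) * q) (F : ℂ[X]) :
    emb (eAC A D C) (aeval a F) * inc (A × D) C q =
      emb (eEC A D C) (aeval b F) * inc (A × D) C q := by
  have pw : ∀ (n : ℕ) (k l : C), inc A D (sl (a ^ n) k l) * q = inc' A D (sl (b ^ n) k l) * q := by
    intro n
    induction n with
    | zero =>
      intro k l
      rw [pow_zero, pow_zero, ← map_one (inc A C), ← map_one (inc D C), sl_inc, sl_inc]
      split_ifs <;> simp
    | succ n ih =>
      intro k l
      rw [pow_succ', pow_succ', sl_mul, sl_mul, map_sum, map_sum, Finset.sum_mul, Finset.sum_mul]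
      refine Finset.sum_congr rfl fun j _ => ?_
      rw [(sl_pow_commute hc n k j j l).eq, map_mul, mul_assoc, h, ← mul_assoc,
        (inc_commute _ _).eq, mul_assoc, ih, ← mul_assoc, ← map_mul]
  induction F using Polynomial.induction_on' with
  | add F G hF hG => simp only [map_add, add_mul, hF, hG]
  | monomial n c =>
    rw [aeval_monomial, aeval_monomial, ← Algebra.smul_def, ← Algebra.smul_def, map_smul, map_smul,
      smul_mul_assoc, smul_mul_assoc]
    congr 1
    refine sl_ext fun k l => ?_
    rw [sl_mul_inc, sl_mul_inc, sl_eAC, sl_eEC, pw]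

theorem mul_eq_zero_of_mul_marg {n m : Type*} [Fintype n] [DecidableEq n] [Fintype m]
    [DecidableEq m] (j : Matrix m m ℂ →⋆ₐ[ℂ] Matrix n n ℂ) {M X : Matrix n n ℂ}
    (hM : M.PosSemidef) (h : X * j (marg j M) = 0) : X * M = 0 := by
  rw [← sup0_marg_mul j hM, ← mul_pinv (marg_posSemidef j hM).isHermitian, map_mul, ← mul_assoc,
    ← mul_assoc, h, zero_mul, zero_mul]

theorem mul_proj_eq_zero {n : Type*} [Fintype n] [DecidableEq n] {M N : Matrix n n ℂ}
    (hM : M.PosSemidef) (hN : N.IsHermitian) (h : trace (fn ker0 N * M) = 0) :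
    M * fn ker0 N = 0 := by
  refine mul_eq_zero_of_trace hM ?_
  have hP : fn ker0 N * fn ker0 N = fn ker0 N := by
    rw [fn_mul hN]
    exact fn_congr hN fun i => by by_cases h : hN.eigenvalues i = 0 <;> simp [ker0, h]
  rw [(fn_isHermitian hN _).eq, trace_mul_comm, ← mul_assoc, hP, h]

/-- The inequality `S(C|D) ≤ S(C|AE)` for compatible states on `AEC`, `ADE` and `ADC`, when
`C - A - E`, `C - E - A` and `A - D - E` are quantum Markov chains. -/
theorem core {ρ : Matrix ((A × E) × C) ((A × E) × C) ℂ} (hρ : ρ.PosSemidef)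
    {τ : Matrix ((A × D) × E) ((A × D) × E) ℂ} (hτ : τ.PosSemidef)
    {υ : Matrix ((A × D) × C) ((A × D) × C) ℂ} (hυ : υ.PosSemidef)
    {r : Matrix (A × E) (A × E) ℂ} {ρA : Matrix A A ℂ} {ρE : Matrix E E ℂ}
    {ρAC : Matrix (A × C) (A × C) ℂ} {ρEC : Matrix (E × C) (E × C) ℂ}
    {q : Matrix (A × D) (A × D) ℂ} {ρD : Matrix D D ℂ} {ρDE : Matrix (D × E) (D × E) ℂ}
    {ρDC : Matrix (D × C) (D × C) ℂ}
    (hr : marg (inc (A × E) C) ρ = r) (hAC : marg (emb (eAC A E C)) ρ = ρAC)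
    (hEC : marg (emb (eEC A E C)) ρ = ρEC) (hA : marg (inc A E) r = ρA)
    (hE : marg (inc' A E) r = ρE)
    (hr' : marg (emb (eAC A D E)) τ = r) (hq : marg (inc (A × D) E) τ = q)
    (hDE : marg (emb (eEC A D E)) τ = ρDE) (hD : marg (inc' A D) q = ρD)
    (hq' : marg (inc (A × D) C) υ = q) (hAC' : marg (emb (eAC A D C)) υ = ρAC)
    (hDC : marg (emb (eEC A D C)) υ = ρDC)
    (h1 : ent ρ + ent ρA = ent ρAC + ent r) (h2 : ent ρ + ent ρE = ent ρEC + ent r)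
    (h3 : ent τ + ent ρD = ent q + ent ρDE) :
    ent ρDC - ent ρD ≤ ent ρ - ent r := by
  obtain ⟨a, b, pa, -, aA, aρ, ca, cc, ab, ba⟩ := double_markov hρ hr hAC hEC hA hE h1 h2
  have pr : r.PosSemidef := hr ▸ marg_posSemidef _ hρ
  have pAC : ρAC.PosSemidef := hAC ▸ marg_posSemidef _ hρ
  have pq : q.PosSemidef := hq ▸ marg_posSemidef _ hτ
  have pD : ρD.PosSemidef := hD ▸ marg_posSemidef _ pq
  have pDC : ρDC.PosSemidef := hDC ▸ marg_posSemidef _ hυ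
  have hAq : marg (inc A D) q = ρA := by
    rw [← hq', marg_AC, hAC', ← hAC, ← marg_AC, hr, hA]
  have hDD : marg (inc D C) ρDC = ρD := by rw [← hDC, ← marg_EC, hq', hD]
  have tm := fun k l => transfer_markov hτ hr' hq hDE hD h3 (ab k l) (ba k l)
  have tr := fun k l => transfer pq (tm k l).1 (by rw [hD]; exact (tm k l).2)
  have ha : ∀ k l, (sl a k l)ᴴ = sl a l k := by
    intro k l
    rw [← sl_conjTranspose, pa.isHermitian.eq]
  have hφ : ∀ k l, (phi q (sl a k l))ᴴ = phi q (sl a l k) := by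
    intro k l
    rw [← (tr k l).2.2, ha]
  have hφq : ∀ k l, inc A D (sl a k l) * q = inc' A D (phi q (sl a k l)) * q := by
    intro k l
    have := congrArg conjTranspose (tr l k).1
    rw [conjTranspose_mul, conjTranspose_mul, pq.isHermitian.eq, ← map_conjTranspose,
      ← map_conjTranspose, hφ, ha] at this
    rw [this, (tm k l).1.eq]
  -- the copy on `DC` of the operator `a`
  obtain ⟨t, ht⟩ : ∃ t : Matrix (D × C) (D × C) ℂ, ∀ k l, sl t k l = phi q (sl a k l) :=
    ⟨of fun x y => phi q (sl a x.2 y.2) x.1 y.1, fun _ _ => rfl⟩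
  have tH : t.IsHermitian := by
    refine sl_ext fun k l => ?_
    rw [sl_conjTranspose, ht, ht, hφ]
  have tD : Commute t (inc D C ρD) := by
    refine sl_ext fun k l => ?_
    rw [sl_mul_inc, sl_inc_mul, ht, ← hD]
    exact (tr k l).2.1
  have mom := moments (q := q) (b := t) cc (fun k l => by rw [ht]; exact hφq k l)
  have trf : ∀ f : ℝ → ℝ, trace (fn f a * ρAC) = trace (fn f t * ρDC) := by
    intro f
    obtain ⟨F, f1, f2⟩ := exists_poly_fn₂ pa.isHermitian tH f
    have := mul_eq_zero_of_mul_marg (inc (A × D) C) hυ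
      (X := emb (eAC A D C) (aeval a F) - emb (eEC A D C) (aeval t F))
      (by rw [hq', sub_mul, mom, sub_self])
    rw [sub_mul, sub_eq_zero] at this
    rw [f1, f2, ← hAC', ← hDC, ← trace_mul_marg, ← trace_mul_marg, this]
  have mom1 := mom X
  rw [aeval_X, aeval_X] at mom1
  have cQ : Commute (emb (eAC A D C) a) (inc (A × D) C q) := by
    refine sl_ext fun k l => ?_
    rw [sl_mul_inc, sl_inc_mul, sl_eAC]
    exact (tm k l).1
  have ω1 : t * inc D C ρD = marg (emb (eEC A D C)) (emb (eAC A D C) a * inc (A × D) C q) := by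
    rw [mom1, marg_mul_left, cross_EC, hD]
  have ωpos : (t * inc D C ρD).PosSemidef := by
    rw [ω1]
    exact marg_posSemidef _
      (mul_posSemidef (map_posSemidef _ pa) (map_posSemidef _ pq) cQ)
  have ωtr : trace (t * inc D C ρD) = trace ρDC := by
    rw [ω1, trace_marg, trace_mul_marg, cross_AC, hAq, aA, ← hAC', trace_marg, ← hDC, trace_marg]
  have aAC : fn ker0 a * a = 0 := by
    have := congrArg conjTranspose (mul_ker0 pa.isHermitian)
    simpa [(fn_isHermitian pa.isHermitian _).eq, pa.isHermitian.eq] using this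
  -- since `ρ_{AEC} = a ρ_{AE}` with commuting factors, `log ρ_{AEC} = log a + log ρ_{AE}` on its
  -- support
  have hent : ent ρ = ent r - (trace (fn Real.log a * ρAC)).re := by
    have iaH := map_isHermitian (emb (eAC A E C)) pa.isHermitian
    have irH := map_isHermitian (inc (A × E) C) pr.isHermitian
    have := mul_log_mul (M := ρ) iaH irH ca
      (by rw [← aρ, ca.eq, mul_assoc, mul_ker0 iaH, mul_zero])
      (by rw [← aρ, mul_assoc, mul_ker0 irH, mul_zero])
    rw [aρ, ← map_fn _ pa.isHermitian, ← map_fn _ pr.isHermitian] at this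
    rw [ent, this, trace_add, trace_mul_comm ρ, trace_mul_marg, trace_mul_comm ρ, trace_mul_marg,
      hAC, hr, ent, trace_mul_comm r, Complex.add_re]
    ring
  have k1 : ρDC * fn ker0 t = 0 := by
    refine mul_proj_eq_zero pDC tH ?_
    rw [← trf, ← aA, ← mul_assoc, aAC, zero_mul, trace_zero]
  have iDH := map_isHermitian (inc D C) pD.isHermitian
  have k2 : ρDC * fn ker0 (inc D C ρD) = 0 := by
    rw [← map_fn _ pD.isHermitian, ← hDD]
    exact mul_ker0_marg _ pDC
  -- `t ρ_D` is a state on `DC`, so the relative entropy of `ρ_{DC}` with respect to it is nonnegative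
  have kl := klein pDC ωpos (mul_ker0_mul tH iDH tD k1 k2)
  rw [mul_log_mul tH iDH tD k1 k2, ωtr, sub_self, trace_add, Complex.add_re, trace_mul_comm, ← trf,
    ← map_fn _ pD.isHermitian, trace_mul_comm ρDC, trace_mul_marg, hDD, trace_mul_comm _ ρD] at kl
  have hentD : ent ρD = -(trace (ρD * fn Real.log ρD)).re := rfl
  rw [hent]
  linarith

end Core

/-! ### Purification -/

section Purification

/-- The two reductions of the pure state with amplitude matrix `L` have equal entropy; the first
is computed in nats, the second in bits. -/
theorem ent_of_factor {m k : Type*} [Fintype m] [DecidableEq m] [Fintype k] [DecidableEq k]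
    (L : Matrix m k ℂ) {X : Matrix m m ℂ} {N : Matrix k k ℂ} (hX : X = L * Lᴴ)
    (hN : N = (Lᴴ * L)ᵀ) : ent X = vNEntropy N * Real.log 2 := by
  have h2 : Real.log 2 ≠ 0 := (Real.log_pos one_lt_two).ne'
  have hH : X.IsHermitian := hX ▸ isHermitian_mul_conjTranspose_self L
  rw [hN, ← vNEntropy_mul_comm, ← hX, vNEntropy_eq hH, div_mul_cancel₀ _ h2]

theorem ent_eq_vNEntropy {m : Type*} [Fintype m] [DecidableEq m] {X N : Matrix m m ℂ}
    (hX : X.PosSemidef) (h : N = X) : ent X = vNEntropy N * Real.log 2 := by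
  have h2 : Real.log 2 ≠ 0 := (Real.log_pos one_lt_two).ne'
  rw [h, vNEntropy_eq hX.isHermitian, div_mul_cancel₀ _ h2]

variable {A B C D E : Type*} [Fintype A] [DecidableEq A] [Fintype B] [DecidableEq B]
  [Fintype C] [DecidableEq C] [Fintype D] [DecidableEq D] [Fintype E] [DecidableEq E]

/-- The inequality for a state given by a purification `K`, with purifying system `E`. -/
theorem of_purification {ρ : Matrix (A × B × C × D) (A × B × C × D) ℂ}
    (K : Matrix (A × B × C × D) E ℂ) (hK : K * Kᴴ = ρ)
    (h1 : (SAC ρ - SA ρ) + (SBCD ρ - SBD ρ) = 0)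
    (h2 : SABD ρ + SBCD ρ - SABCD ρ - SBD ρ = 0)
    (h3 : (SAD ρ - SD ρ) + (SABC ρ - SBC ρ) = 0) :
    (SCD ρ - SD ρ) + (SBCD ρ - SBD ρ) ≤ 0 := by
  have hρ : ∀ x y, ρ x y = ∑ e, K x e * star (K y e) := by
    intro x y
    rw [← hK, mul_apply]
    rfl
  have pρ : ρ.PosSemidef := hK ▸ posSemidef_self_mul_conjTranspose K
  -- the amplitudes of the purification, grouped according to the various bipartitions
  let L1 : Matrix ((A × E) × C) (B × D) ℂ := of fun x y => K (x.1.1, y.1, x.2, y.2) x.1.2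
  let L2 : Matrix ((A × D) × E) (B × C) ℂ := of fun x y => K (x.1.1, y.1, y.2, x.1.2) x.2
  let L3 : Matrix ((A × D) × C) (B × E) ℂ := of fun x y => K (x.1.1, y.1, x.2, x.1.2) y.2
  let L4 : Matrix (A × E) (B × C × D) ℂ := of fun x y => K (x.1, y.1, y.2.1, y.2.2) x.2
  let L5 : Matrix (E × C) (A × B × D) ℂ := of fun x y => K (y.1, y.2.1, x.2, y.2.2) x.1
  let L6 : Matrix E (A × B × C × D) ℂ := of fun x y => K y x
  let L7 : Matrix (D × E) (A × B × C) ℂ := of fun x y => K (y.1, y.2.1, y.2.2, x.1) x.2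
  -- summations are brought into the order `A, B, C, D, E`
  have sAB (f : A → B → ℂ) : ∑ y, ∑ x, f x y = ∑ x, ∑ y, f x y := Finset.sum_comm
  have sAC (f : A → C → ℂ) : ∑ y, ∑ x, f x y = ∑ x, ∑ y, f x y := Finset.sum_comm
  have sAD (f : A → D → ℂ) : ∑ y, ∑ x, f x y = ∑ x, ∑ y, f x y := Finset.sum_comm
  have sAE (f : A → E → ℂ) : ∑ y, ∑ x, f x y = ∑ x, ∑ y, f x y := Finset.sum_comm
  have sBC (f : B → C → ℂ) : ∑ y, ∑ x, f x y = ∑ x, ∑ y, f x y := Finset.sum_comm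
  have sBD (f : B → D → ℂ) : ∑ y, ∑ x, f x y = ∑ x, ∑ y, f x y := Finset.sum_comm
  have sBE (f : B → E → ℂ) : ∑ y, ∑ x, f x y = ∑ x, ∑ y, f x y := Finset.sum_comm
  have sCD (f : C → D → ℂ) : ∑ y, ∑ x, f x y = ∑ x, ∑ y, f x y := Finset.sum_comm
  have sCE (f : C → E → ℂ) : ∑ y, ∑ x, f x y = ∑ x, ∑ y, f x y := Finset.sum_comm
  have sDE (f : D → E → ℂ) : ∑ y, ∑ x, f x y = ∑ x, ∑ y, f x y := Finset.sum_comm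
  have p1 := posSemidef_self_mul_conjTranspose L1
  have p2 := posSemidef_self_mul_conjTranspose L2
  have p3 := posSemidef_self_mul_conjTranspose L3
  have hr : marg (emb (eAC A D E)) (L2 * L2ᴴ) =
      marg (inc (A × E) C) (L1 * L1ᴴ) := by
    ext x y
    simp only [L1, L2, marg_emb_apply, eAC, eEC, Equiv.coe_fn_symm_mk, Equiv.refl_symm, Equiv.refl_apply,
      Equiv.prodComm_symm, Equiv.prodComm_apply, Prod.swap, mul_apply, conjTranspose_apply,
      transpose_apply, of_apply, Fintype.sum_prod_type, hρ, sAB, sAC, sAD, sAE, sBC, sBD, sBE, sCD, sCE, sDE]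
  have hq : marg (inc (A × D) C) (L3 * L3ᴴ) =
      marg (inc (A × D) E) (L2 * L2ᴴ) := by
    ext x y
    simp only [L2, L3, marg_emb_apply, eAC, eEC, Equiv.coe_fn_symm_mk, Equiv.refl_symm, Equiv.refl_apply,
      Equiv.prodComm_symm, Equiv.prodComm_apply, Prod.swap, mul_apply, conjTranspose_apply,
      transpose_apply, of_apply, Fintype.sum_prod_type, hρ, sAB, sAC, sAD, sAE, sBC, sBD, sBE, sCD, sCE, sDE]
  have hAC : marg (emb (eAC A D C)) (L3 * L3ᴴ) =
      marg (emb (eAC A E C)) (L1 * L1ᴴ) := by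
    ext x y
    simp only [L1, L3, marg_emb_apply, eAC, eEC, Equiv.coe_fn_symm_mk, Equiv.refl_symm, Equiv.refl_apply,
      Equiv.prodComm_symm, Equiv.prodComm_apply, Prod.swap, mul_apply, conjTranspose_apply,
      transpose_apply, of_apply, Fintype.sum_prod_type, hρ, sAB, sAC, sAD, sAE, sBC, sBD, sBE, sCD, sCE, sDE]
  have main := core p1 p2 p3 rfl rfl rfl rfl rfl hr rfl rfl rfl hq hAC rfl
  have e1 : ent (L1 * L1ᴴ) = SBD ρ * Real.log 2 := by
    refine ent_of_factor L1 ?_ ?_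
    · ext x y
      simp only [L1, marg_emb_apply, eAC, eEC, Equiv.coe_fn_symm_mk, Equiv.refl_symm, Equiv.refl_apply,
      Equiv.prodComm_symm, Equiv.prodComm_apply, Prod.swap, mul_apply, conjTranspose_apply,
      transpose_apply, of_apply, Fintype.sum_prod_type, hρ, sAB, sAC, sAD, sAE, sBC, sBD, sBE, sCD, sCE, sDE]
    · ext x y
      simp only [L1, marg_emb_apply, eAC, eEC, Equiv.coe_fn_symm_mk, Equiv.refl_symm, Equiv.refl_apply,
      Equiv.prodComm_symm, Equiv.prodComm_apply, Prod.swap, mul_apply, conjTranspose_apply,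
      transpose_apply, of_apply, Fintype.sum_prod_type, hρ, sAB, sAC, sAD, sAE, sBC, sBD, sBE, sCD, sCE, sDE]
      simp only [mul_comm]
  have e2 : ent (L2 * L2ᴴ) = SBC ρ * Real.log 2 := by
    refine ent_of_factor L2 ?_ ?_
    · ext x y
      simp only [L2, marg_emb_apply, eAC, eEC, Equiv.coe_fn_symm_mk, Equiv.refl_symm, Equiv.refl_apply,
      Equiv.prodComm_symm, Equiv.prodComm_apply, Prod.swap, mul_apply, conjTranspose_apply,
      transpose_apply, of_apply, Fintype.sum_prod_type, hρ, sAB, sAC, sAD, sAE, sBC, sBD, sBE, sCD, sCE, sDE]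
    · ext x y
      simp only [L2, marg_emb_apply, eAC, eEC, Equiv.coe_fn_symm_mk, Equiv.refl_symm, Equiv.refl_apply,
      Equiv.prodComm_symm, Equiv.prodComm_apply, Prod.swap, mul_apply, conjTranspose_apply,
      transpose_apply, of_apply, Fintype.sum_prod_type, hρ, sAB, sAC, sAD, sAE, sBC, sBD, sBE, sCD, sCE, sDE]
      simp only [mul_comm]
  have e3 : ent (marg (inc (A × E) C) (L1 * L1ᴴ)) = SBCD ρ * Real.log 2 := by
    refine ent_of_factor L4 ?_ ?_
    · ext x y
      simp only [L1, L4, marg_emb_apply, eAC, eEC, Equiv.coe_fn_symm_mk, Equiv.refl_symm, Equiv.refl_apply,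
      Equiv.prodComm_symm, Equiv.prodComm_apply, Prod.swap, mul_apply, conjTranspose_apply,
      transpose_apply, of_apply, Fintype.sum_prod_type, hρ, sAB, sAC, sAD, sAE, sBC, sBD, sBE, sCD, sCE, sDE]
    · ext x y
      simp only [L1, L4, marg_emb_apply, eAC, eEC, Equiv.coe_fn_symm_mk, Equiv.refl_symm, Equiv.refl_apply,
      Equiv.prodComm_symm, Equiv.prodComm_apply, Prod.swap, mul_apply, conjTranspose_apply,
      transpose_apply, of_apply, Fintype.sum_prod_type, hρ, sAB, sAC, sAD, sAE, sBC, sBD, sBE, sCD, sCE, sDE]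
      simp only [mul_comm]
  have e4 : ent (marg (emb (eEC A E C)) (L1 * L1ᴴ)) = SABD ρ * Real.log 2 := by
    refine ent_of_factor L5 ?_ ?_
    · ext x y
      simp only [L1, L5, marg_emb_apply, eAC, eEC, Equiv.coe_fn_symm_mk, Equiv.refl_symm, Equiv.refl_apply,
      Equiv.prodComm_symm, Equiv.prodComm_apply, Prod.swap, mul_apply, conjTranspose_apply,
      transpose_apply, of_apply, Fintype.sum_prod_type, hρ, sAB, sAC, sAD, sAE, sBC, sBD, sBE, sCD, sCE, sDE]
    · ext x y
      simp only [L1, L5, marg_emb_apply, eAC, eEC, Equiv.coe_fn_symm_mk, Equiv.refl_symm, Equiv.refl_apply,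
      Equiv.prodComm_symm, Equiv.prodComm_apply, Prod.swap, mul_apply, conjTranspose_apply,
      transpose_apply, of_apply, Fintype.sum_prod_type, hρ, sAB, sAC, sAD, sAE, sBC, sBD, sBE, sCD, sCE, sDE]
      simp only [mul_comm]
  have e5 : ent (marg (inc' A E) (marg (inc (A × E) C) (L1 * L1ᴴ))) = SABCD ρ * Real.log 2 := by
    refine ent_of_factor L6 ?_ ?_
    · ext x y
      simp only [L1, L6, marg_emb_apply, eAC, eEC, Equiv.coe_fn_symm_mk, Equiv.refl_symm, Equiv.refl_apply,
      Equiv.prodComm_symm, Equiv.prodComm_apply, Prod.swap, mul_apply, conjTranspose_apply,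
      transpose_apply, of_apply, Fintype.sum_prod_type, hρ, sAB, sAC, sAD, sAE, sBC, sBD, sBE, sCD, sCE, sDE]
    · ext x y
      simp only [L1, L6, marg_emb_apply, eAC, eEC, Equiv.coe_fn_symm_mk, Equiv.refl_symm, Equiv.refl_apply,
      Equiv.prodComm_symm, Equiv.prodComm_apply, Prod.swap, mul_apply, conjTranspose_apply,
      transpose_apply, of_apply, Fintype.sum_prod_type, hρ, sAB, sAC, sAD, sAE, sBC, sBD, sBE, sCD, sCE, sDE]
      simp only [mul_comm]
  have e6 : ent (marg (emb (eEC A D E)) (L2 * L2ᴴ)) = SABC ρ * Real.log 2 := by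
    refine ent_of_factor L7 ?_ ?_
    · ext x y
      simp only [L2, L7, marg_emb_apply, eAC, eEC, Equiv.coe_fn_symm_mk, Equiv.refl_symm, Equiv.refl_apply,
      Equiv.prodComm_symm, Equiv.prodComm_apply, Prod.swap, mul_apply, conjTranspose_apply,
      transpose_apply, of_apply, Fintype.sum_prod_type, hρ, sAB, sAC, sAD, sAE, sBC, sBD, sBE, sCD, sCE, sDE]
    · ext x y
      simp only [L2, L7, marg_emb_apply, eAC, eEC, Equiv.coe_fn_symm_mk, Equiv.refl_symm, Equiv.refl_apply,
      Equiv.prodComm_symm, Equiv.prodComm_apply, Prod.swap, mul_apply, conjTranspose_apply,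
      transpose_apply, of_apply, Fintype.sum_prod_type, hρ, sAB, sAC, sAD, sAE, sBC, sBD, sBE, sCD, sCE, sDE]
      simp only [mul_comm]
  have e7 : ent (marg (emb (eAC A E C)) (L1 * L1ᴴ)) = SAC ρ * Real.log 2 := by
    refine ent_eq_vNEntropy (marg_posSemidef _ p1) ?_
    ext x y
    simp only [L1, marg_emb_apply, eAC, eEC, Equiv.coe_fn_symm_mk, Equiv.refl_symm, Equiv.refl_apply,
      Equiv.prodComm_symm, Equiv.prodComm_apply, Prod.swap, mul_apply, conjTranspose_apply,
      transpose_apply, of_apply, Fintype.sum_prod_type, hρ, sAB, sAC, sAD, sAE, sBC, sBD, sBE, sCD, sCE, sDE]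
  have e8 : ent (marg (inc A E) (marg (inc (A × E) C) (L1 * L1ᴴ))) = SA ρ * Real.log 2 := by
    refine ent_eq_vNEntropy (marg_posSemidef _ (marg_posSemidef _ p1)) ?_
    ext x y
    simp only [L1, marg_emb_apply, eAC, eEC, Equiv.coe_fn_symm_mk, Equiv.refl_symm, Equiv.refl_apply,
      Equiv.prodComm_symm, Equiv.prodComm_apply, Prod.swap, mul_apply, conjTranspose_apply,
      transpose_apply, of_apply, Fintype.sum_prod_type, hρ, sAB, sAC, sAD, sAE, sBC, sBD, sBE, sCD, sCE, sDE]
  have e9 : ent (marg (inc (A × D) E) (L2 * L2ᴴ)) = SAD ρ * Real.log 2 := by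
    refine ent_eq_vNEntropy (marg_posSemidef _ p2) ?_
    ext x y
    simp only [L2, marg_emb_apply, eAC, eEC, Equiv.coe_fn_symm_mk, Equiv.refl_symm, Equiv.refl_apply,
      Equiv.prodComm_symm, Equiv.prodComm_apply, Prod.swap, mul_apply, conjTranspose_apply,
      transpose_apply, of_apply, Fintype.sum_prod_type, hρ, sAB, sAC, sAD, sAE, sBC, sBD, sBE, sCD, sCE, sDE]
  have e10 : ent (marg (inc' A D) (marg (inc (A × D) E) (L2 * L2ᴴ))) = SD ρ * Real.log 2 := by
    refine ent_eq_vNEntropy (marg_posSemidef _ (marg_posSemidef _ p2)) ?_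
    ext x y
    simp only [L2, marg_emb_apply, eAC, eEC, Equiv.coe_fn_symm_mk, Equiv.refl_symm, Equiv.refl_apply,
      Equiv.prodComm_symm, Equiv.prodComm_apply, Prod.swap, mul_apply, conjTranspose_apply,
      transpose_apply, of_apply, Fintype.sum_prod_type, hρ, sAB, sAC, sAD, sAE, sBC, sBD, sBE, sCD, sCE, sDE]
  have e11 : ent (marg (emb (eEC A D C)) (L3 * L3ᴴ)) = SCD ρ * Real.log 2 := by
    rw [ent_eq_vNEntropy (marg_posSemidef _ p3) rfl,
      ← vNEntropy_submatrix (Equiv.prodComm C D) (marg_posSemidef _ p3).isHermitian, SCD]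
    congr 2
    ext x y
    simp only [submatrix_apply, L3, marg_emb_apply, eAC, eEC, Equiv.coe_fn_symm_mk, Equiv.refl_symm, Equiv.refl_apply,
      Equiv.prodComm_symm, Equiv.prodComm_apply, Prod.swap, mul_apply, conjTranspose_apply,
      transpose_apply, of_apply, Fintype.sum_prod_type, hρ, sAB, sAC, sAD, sAE, sBC, sBD, sBE, sCD, sCE, sDE]
  rw [e1, e2, e3, e4, e5, e6, e7, e8, e9, e10, e11] at main
  have hl : 0 < Real.log 2 := Real.log_pos one_lt_two
  have := main
    (by linear_combination (-Real.log 2) * h1)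
    (by linear_combination (-Real.log 2) * h2)
    (by linear_combination (-Real.log 2) * h3)
  have h5 : ((SCD ρ - SD ρ) + (SBCD ρ - SBD ρ)) * Real.log 2 ≤ 0 := by linarith
  exact nonpos_of_mul_nonpos_left h5 hl

end Purification

end QInfo

/-- **Theorem 1″ (2).** If `S(C|A)+S(C|BD) = 0`, `I(A;C|BD) = 0` and
`S(A|D)+S(A|BC) = 0`, then `S(C|D) + S(C|BD) ≤ 0`. -/
theorem constrained_inequality''_two
    {A B C D : Type*} [Fintype A] [DecidableEq A] [Fintype B] [DecidableEq B]
    [Fintype C] [DecidableEq C] [Fintype D] [DecidableEq D]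
    (ρ : Matrix (A × B × C × D) (A × B × C × D) ℂ) (hρ : IsState ρ)
    (h1 : (SAC ρ - SA ρ) + (SBCD ρ - SBD ρ) = 0)
    (h2 : SABD ρ + SBCD ρ - SABCD ρ - SBD ρ = 0)
    (h3 : (SAD ρ - SD ρ) + (SABC ρ - SBC ρ) = 0) :
    (SCD ρ - SD ρ) + (SBCD ρ - SBD ρ) ≤ 0 := by
  obtain ⟨K, hK, hKK⟩ := QInfo.exists_sqrt hρ.1
  exact QInfo.of_purification K (by rw [hK, hKK]) h1 h2 h3
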